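/- (Solution of the Björling problem for non-minimal CMC surfaces: existence.) Let J ⊆ ℝ be an open interval, f₀ : J → su(2) a regular real analytic curve (f₀′ nonvanishing), and v : J → su(2) a nonvanishing real analytic vector field with ⟨v(x), f₀′(x)⟩ = 0 for all x ∈ J. Let H ≠ 0 be a real number. Then there exist an open set Σ ⊆ ℂ containing J × {0} and a smooth conformal immersion f : Σ → su(2) with constant mean curvature H such that f(x,0) = f₀(x) for all x ∈ J and, for each x ∈ J, ∂_y f(x,0) is a positive scalar multiple of v(x) (so the tangent plane of f along the curve is spanned by f₀′ and v). -/

import Mathlib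

open Matrix Complex

noncomputable section

attribute [local instance] Matrix.linftyOpNormedAddCommGroup Matrix.linftyOpNormedSpace
  Matrix.linftyOpNormedRing Matrix.linftyOpNormedAlgebra

/-- The space of 2×2 complex matrices. -/
abbrev M2 : Type := Matrix (Fin 2) (Fin 2) ℂ

/-- Basis vector `e₁` of su(2). -/
def e1 : M2 := !![0, -Complex.I; -Complex.I, 0]

/-- Basis vector `e₂` of su(2). -/
def e2 : M2 := !![0, 1; -1, 0]

/-- Basis vector `e₃` of su(2). -/
def e3 : M2 := !![Complex.I, 0; 0, -Complex.I]

/-- The inner product `⟨X,Y⟩ = -(1/2) tr (XY)` identifying su(2) with E³. -/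
def ip (X Y : M2) : ℂ := -(1/2 : ℂ) * (X * Y).trace

/-- Partial derivative in the `x`-direction. -/
def px (f : ℂ → M2) (z : ℂ) : M2 := fderiv ℝ f z 1

/-- Partial derivative in the `y`-direction. -/
def py (f : ℂ → M2) (z : ℂ) : M2 := fderiv ℝ f z Complex.I

/-- Wirtinger derivative `∂_z = (1/2)(∂_x - i ∂_y)`. -/
def dz (f : ℂ → M2) (z : ℂ) : M2 := (2:ℂ)⁻¹ • (px f z - Complex.I • py f z)

/-- Wirtinger derivative `∂_z̄ = (1/2)(∂_x + i ∂_y)`. -/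
def dzb (f : ℂ → M2) (z : ℂ) : M2 := (2:ℂ)⁻¹ • (px f z + Complex.I • py f z)

/-- `x`-derivative of a real-valued function on ℂ. -/
def pxR (u : ℂ → ℝ) (z : ℂ) : ℝ := fderiv ℝ u z 1

/-- `y`-derivative of a real-valued function on ℂ. -/
def pyR (u : ℂ → ℝ) (z : ℂ) : ℝ := fderiv ℝ u z Complex.I

/-- Wirtinger derivative `u_z` of a real-valued function. -/
def dzR (u : ℂ → ℝ) (z : ℂ) : ℂ := (2:ℂ)⁻¹ * ((pxR u z : ℂ) - Complex.I * (pyR u z : ℂ))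

/-- Wirtinger derivative `u_z̄` of a real-valued function. -/
def dzbR (u : ℂ → ℝ) (z : ℂ) : ℂ := (2:ℂ)⁻¹ * ((pxR u z : ℂ) + Complex.I * (pyR u z : ℂ))

/-- `x`-derivative of a complex-valued function on ℂ. -/
def pxC (q : ℂ → ℂ) (z : ℂ) : ℂ := fderiv ℝ q z 1

/-- `y`-derivative of a complex-valued function on ℂ. -/
def pyC (q : ℂ → ℂ) (z : ℂ) : ℂ := fderiv ℝ q z Complex.I

/-- Wirtinger derivative `∂_z` of a complex-valued function. -/
def dzC (q : ℂ → ℂ) (z : ℂ) : ℂ := (2:ℂ)⁻¹ * (pxC q z - Complex.I * pyC q z)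

/-- Wirtinger derivative `∂_z̄` of a complex-valued function. -/
def dzbC (q : ℂ → ℂ) (z : ℂ) : ℂ := (2:ℂ)⁻¹ * (pxC q z + Complex.I * pyC q z)

/-- `IsCMCImmersion S H f` says that `f` is a smooth su(2)-valued conformal immersion on
`S` which has constant mean curvature `H`: there are a smooth conformal factor `u` and a
smooth `SU(2)` coordinate frame `F` (so that `N = F e₃ F⁻¹` is the unit normal) with
`(1/8) e^{-2u} ⟨f_xx + f_yy, N⟩ = H`. -/
def IsCMCImmersion (S : Set ℂ) (H : ℝ) (f : ℂ → M2) : Prop :=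
  ContDiffOn ℝ (⊤ : ℕ∞) f S ∧
  (∀ z ∈ S, (f z)ᴴ = -(f z) ∧ (f z).trace = 0) ∧
  ∃ u : ℂ → ℝ, ContDiffOn ℝ (⊤ : ℕ∞) u S ∧
    (∀ z ∈ S,
      ip (px f z) (px f z) = ((4 * Real.exp (2 * u z) : ℝ) : ℂ) ∧
      ip (py f z) (py f z) = ((4 * Real.exp (2 * u z) : ℝ) : ℂ) ∧
      ip (px f z) (py f z) = 0) ∧
    ∃ F : ℂ → M2, ContDiffOn ℝ (⊤ : ℕ∞) F S ∧
      ∀ z ∈ S, (F z)ᴴ * F z = 1 ∧ (F z).det = 1 ∧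
        F z * e1 * (F z)⁻¹ = (((2 * Real.exp (u z))⁻¹ : ℝ) : ℂ) • px f z ∧
        F z * e2 * (F z)⁻¹ = (((2 * Real.exp (u z))⁻¹ : ℝ) : ℂ) • py f z ∧
        ip (px (px f) z + py (py f) z) (F z * e3 * (F z)⁻¹)
          = ((8 * Real.exp (2 * u z) * H : ℝ) : ℂ)

set_option linter.unusedSectionVars false
set_option linter.unusedSimpArgs false

section generic
variable {V : Type*} [NormedRing V] [NormedAlgebra ℂ V] [CompleteSpace V]

abbrev KK := unitInterval × unitInterval

/-- projection of a real to the unit interval -/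
def pI (t : ℝ) : unitInterval := Set.projIcc 0 1 zero_le_one t

lemma pI_coe (t : unitInterval) : pI (t : ℝ) = t := Set.projIcc_val _ t

lemma continuous_pI : Continuous pI :=
  continuous_projIcc (h := zero_le_one)

lemma coe_pI {t : ℝ} (h : t ∈ Set.Icc (0:ℝ) 1) : ((pI t : unitInterval) : ℝ) = t := by
  simp [pI, Set.projIcc_of_mem _ h]

lemma vol_cont (g : C(KK, V)) :
    Continuous (fun k : KK => ∫ τ in (k.1:ℝ)..(k.2:ℝ), g (k.1, pI τ)) := by
  have hc : Continuous (Function.uncurry (fun (k : KK) (τ : ℝ) => g (k.1, pI τ))) := by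
    have := continuous_pI
    unfold Function.uncurry
    fun_prop
  have h : ∀ k : KK, (∫ τ in (k.1:ℝ)..(k.2:ℝ), g (k.1, pI τ)) =
      (∫ τ in (0:ℝ)..(k.2:ℝ), g (k.1, pI τ)) - ∫ τ in (0:ℝ)..(k.1:ℝ), g (k.1, pI τ) := by
    intro k
    have hk : Continuous (fun τ : ℝ => g (k.1, pI τ)) := by
      have := continuous_pI
      fun_prop
    rw [intervalIntegral.integral_interval_sub_left] <;> exact hk.intervalIntegrable _ _
  simp_rw [h]
  exact (intervalIntegral.continuous_parametric_intervalIntegral_of_continuous hc (by fun_prop)).sub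
    (intervalIntegral.continuous_parametric_intervalIntegral_of_continuous hc (by fun_prop))

/-- Volterra operator in the second variable -/
def volT : C(KK, V) →L[ℂ] C(KK, V) :=
  LinearMap.mkContinuous
    { toFun := fun g => ⟨fun k : KK => ∫ τ in (k.1:ℝ)..(k.2:ℝ), g (k.1, pI τ), vol_cont g⟩
      map_add' := by
        intro f g
        ext k
        have hk : ∀ g : C(KK, V), Continuous (fun τ : ℝ => g (k.1, pI τ)) := by
          intro g
          have := continuous_pI
          fun_prop
        simp only [ContinuousMap.coe_mk, ContinuousMap.add_apply]
        exact intervalIntegral.integral_add ((hk f).intervalIntegrable _ _)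
          ((hk g).intervalIntegrable _ _)
      map_smul' := by
        intro c g
        ext k
        simp }
    1 (by
      intro g
      rw [one_mul, ContinuousMap.norm_le _ (norm_nonneg _)]
      intro k
      refine (intervalIntegral.norm_integral_le_of_norm_le_const (C := ‖g‖) ?_).trans ?_
      · intro τ _
        exact g.norm_coe_le_norm _
      · have h1 := k.1.2
        have h2 := k.2.2
        have : |(k.2:ℝ) - k.1| ≤ 1 := abs_le.2 ⟨by linarith [h1.2, h2.1], by linarith [h1.1, h2.2]⟩
        nlinarith [norm_nonneg g])

lemma volT_apply (g : C(KK, V)) (s t : unitInterval) :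
    volT g (s, t) = ∫ τ in (s:ℝ)..(t:ℝ), g (s, pI τ) := rfl

/-- swap on functions -/
def swK : C(KK, V) →L[ℂ] C(KK, V) :=
  LinearMap.mkContinuous
    { toFun := fun g => g.comp ⟨Prod.swap, continuous_swap⟩
      map_add' := by intros; rfl
      map_smul' := by intros; rfl } 1 (by
      intro g
      rw [one_mul, ContinuousMap.norm_le _ (norm_nonneg _)]
      intro k
      exact g.norm_coe_le_norm _)

/-- Volterra operator in the first variable: `∫_t^s g(σ,t) dσ` -/
def volS : C(KK, V) →L[ℂ] C(KK, V) := swK.comp (volT.comp swK)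

lemma volS_apply (g : C(KK, V)) (s t : unitInterval) :
    volS g (s, t) = ∫ σ in (t:ℝ)..(s:ℝ), g (pI σ, t) := rfl

def seg (z w : ℂ) (s : ℝ) : ℂ := z + s * (w - z)

def IsSol (a b : ℂ → V) (c z w : ℂ) (P Q : C(KK, V)) : Prop :=
  ∀ s t : unitInterval,
    P (s, t) = a (seg z w s) + (c * (w - z)) • (volT (P * Q - Q * P) (s, t)) ∧
    Q (s, t) = b (seg z w t) + (c * (w - z)) • (volS (P * Q - Q * P) (s, t))

lemma IsSol.unique {a b : ℂ → V} {c z w : ℂ} {P Q P' Q' : C(KK, V)}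
    (h : IsSol a b c z w P Q) (h' : IsSol a b c z w P' Q') : P = P' ∧ Q = Q' := by
  set M : ℝ := ‖P‖ + ‖Q‖ + ‖P'‖ + ‖Q'‖ with hM
  have hM0 : 0 ≤ M := by positivity
  set C : ℝ := ‖c * (w - z)‖ * (4 * M) with hC
  have hC0 : 0 ≤ C := by positivity
  -- bracket difference estimate
  have hbr : ∀ k : KK, ∀ B : ℝ, ‖P k - P' k‖ ≤ B → ‖Q k - Q' k‖ ≤ B →
      ‖(P * Q - Q * P) k - (P' * Q' - Q' * P') k‖ ≤ 4 * M * B := by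
    intro k B h1 h2
    have e : (P * Q - Q * P) k - (P' * Q' - Q' * P') k =
      (P k - P' k) * Q k + P' k * (Q k - Q' k) - ((Q k - Q' k) * P k + Q' k * (P k - P' k)) := by
      simp only [ContinuousMap.sub_apply, ContinuousMap.mul_apply]
      noncomm_ring
    have hP := P.norm_coe_le_norm k
    have hQ := Q.norm_coe_le_norm k
    have hP' := P'.norm_coe_le_norm k
    have hQ' := Q'.norm_coe_le_norm k
    have hB : 0 ≤ B := (norm_nonneg _).trans h1
    have n1 : ‖P k‖ ≤ M := by linarith [norm_nonneg P, norm_nonneg Q, norm_nonneg P', norm_nonneg Q']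
    have n2 : ‖Q k‖ ≤ M := by linarith [norm_nonneg P, norm_nonneg Q, norm_nonneg P', norm_nonneg Q']
    have n3 : ‖P' k‖ ≤ M := by linarith [norm_nonneg P, norm_nonneg Q, norm_nonneg P', norm_nonneg Q']
    have n4 : ‖Q' k‖ ≤ M := by linarith [norm_nonneg P, norm_nonneg Q, norm_nonneg P', norm_nonneg Q']
    have m : ∀ x y : V, ∀ p q : ℝ, ‖x‖ ≤ p → ‖y‖ ≤ q → ‖x * y‖ ≤ p * q := fun x y p q h h' =>
      (norm_mul_le _ _).trans (mul_le_mul h h' (norm_nonneg _) ((norm_nonneg _).trans h))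
    rw [e]
    refine (norm_sub_le _ _).trans ?_
    have a1 := norm_add_le ((P k - P' k) * Q k) (P' k * (Q k - Q' k))
    have a2 := norm_add_le ((Q k - Q' k) * P k) (Q' k * (P k - P' k))
    have b1 := m _ _ _ _ h1 n2
    have b2 := m _ _ _ _ n3 h2
    have b3 := m _ _ _ _ h2 n1
    have b4 := m _ _ _ _ n4 h1
    linarith
  have hpI : ∀ {τ s t : ℝ}, s ∈ Set.Icc (0:ℝ) 1 → t ∈ Set.Icc (0:ℝ) 1 → τ ∈ Set.uIcc s t →
      τ ∈ Set.Icc (0:ℝ) 1 := by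
    intro τ s t hs ht h
    exact (Set.OrdConnected.uIcc_subset Set.ordConnected_Icc hs ht) h
  have key : ∀ n : ℕ, ∀ s t : unitInterval,
      ‖P (s, t) - P' (s, t)‖ ≤ M * (C ^ n * |(t:ℝ) - s| ^ n / n.factorial) ∧
      ‖Q (s, t) - Q' (s, t)‖ ≤ M * (C ^ n * |(t:ℝ) - s| ^ n / n.factorial) := by
    intro n
    induction n with
    | zero =>
      intro s t
      have hP := P.norm_coe_le_norm (s, t)
      have hQ := Q.norm_coe_le_norm (s, t)
      have hP' := P'.norm_coe_le_norm (s, t)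
      have hQ' := Q'.norm_coe_le_norm (s, t)
      simp only [pow_zero, Nat.factorial_zero, Nat.cast_one, mul_one, div_one]
      constructor
      · refine (norm_sub_le _ _).trans ?_
        linarith [norm_nonneg Q, norm_nonneg Q']
      · refine (norm_sub_le _ _).trans ?_
        linarith [norm_nonneg P, norm_nonneg P']
    | succ n ih =>
      have hint : ∀ (x y : ℝ), |∫ τ in x..y, |τ - x| ^ n| = |y - x| ^ (n+1) / (n+1) := by
        intro x y
        rcases le_total x y with hxy | hxy
        · have : ∫ τ in x..y, |τ - x| ^ n = ∫ τ in x..y, (τ - x) ^ n := by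
            apply intervalIntegral.integral_congr
            intro τ hτ
            rw [Set.uIcc_of_le hxy] at hτ
            simp only [abs_of_nonneg (sub_nonneg.2 hτ.1)]
          rw [this, intervalIntegral.integral_comp_sub_right (fun τ => τ ^ n), integral_pow,
            abs_of_nonneg (sub_nonneg.2 hxy)]
          simp only [sub_self, ne_eq, Nat.add_eq_zero_iff, one_ne_zero, and_false,
            not_false_eq_true, zero_pow, sub_zero]
          rw [abs_of_nonneg]
          have := sub_nonneg.2 hxy
          positivity
        · have : ∫ τ in x..y, |τ - x| ^ n = ∫ τ in x..y, (x - τ) ^ n := by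
            apply intervalIntegral.integral_congr
            intro τ hτ
            rw [Set.uIcc_of_ge hxy] at hτ
            simp only [abs_of_nonpos (sub_nonpos.2 hτ.2), neg_sub]
          rw [this, intervalIntegral.integral_comp_sub_left (fun τ => τ ^ n), integral_pow,
            abs_of_nonpos (sub_nonpos.2 hxy)]
          simp only [sub_self, ne_eq, Nat.add_eq_zero_iff, one_ne_zero, and_false,
            not_false_eq_true, zero_pow, zero_sub, neg_sub]
          rw [neg_div, abs_neg, abs_of_nonneg]
          have := sub_nonneg.2 hxy
          positivity
      have hfac : ∀ x : ℝ, ‖c * (w - z)‖ * (4 * M * (M * (C ^ n / n.factorial)) * (x ^ (n+1) / (n+1)))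
          = M * (C ^ (n+1) * x ^ (n+1) / (n+1).factorial) := by
        intro x
        have : (n.factorial : ℝ) ≠ 0 := by positivity
        rw [Nat.factorial_succ, hC]
        push_cast
        field_simp
        ring
      have hcont : ∀ x y : ℝ, IntervalIntegrable
          (fun τ => 4 * M * (M * (C ^ n / n.factorial)) * |τ - x| ^ n) MeasureTheory.volume x y := by
        intro x y
        apply Continuous.intervalIntegrable
        fun_prop
      have hab : ∀ x y : ℝ, |∫ τ in x..y, 4 * M * (M * (C ^ n / n.factorial)) * |τ - x| ^ n| =
          4 * M * (M * (C ^ n / n.factorial)) * (|y - x| ^ (n+1) / (n+1)) := by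
        intro x y
        rw [intervalIntegral.integral_const_mul, abs_mul, hint, abs_of_nonneg]
        positivity
      intro s t
      have cI := continuous_pI
      constructor
      · rw [(h s t).1, (h' s t).1, add_sub_add_left_eq_sub, ← smul_sub, norm_smul, volT_apply,
          volT_apply, ← intervalIntegral.integral_sub, ← hfac]
        · refine mul_le_mul_of_nonneg_left ?_ (norm_nonneg _)
          rw [← hab]
          apply intervalIntegral.norm_integral_le_abs_of_norm_le _ (hcont _ _)
          refine (MeasureTheory.ae_restrict_iff' measurableSet_uIoc).2 (Filter.Eventually.of_forall ?_)
          intro τ hτ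
          have hτ' := hpI s.2 t.2 (Set.uIoc_subset_uIcc hτ)
          have := ih s (pI τ)
          rw [coe_pI hτ'] at this
          refine (hbr _ _ this.1 this.2).trans (le_of_eq ?_)
          ring
        · apply Continuous.intervalIntegrable; fun_prop
        · apply Continuous.intervalIntegrable; fun_prop
      · rw [(h s t).2, (h' s t).2, add_sub_add_left_eq_sub, ← smul_sub, norm_smul, volS_apply,
          volS_apply, ← intervalIntegral.integral_sub, abs_sub_comm, ← hfac]
        · refine mul_le_mul_of_nonneg_left ?_ (norm_nonneg _)
          rw [← hab]
          apply intervalIntegral.norm_integral_le_abs_of_norm_le _ (hcont _ _)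
          refine (MeasureTheory.ae_restrict_iff' measurableSet_uIoc).2 (Filter.Eventually.of_forall ?_)
          intro τ hτ
          have hτ' := hpI t.2 s.2 (Set.uIoc_subset_uIcc hτ)
          have := ih (pI τ) t
          rw [coe_pI hτ', abs_sub_comm] at this
          refine (hbr _ _ this.1 this.2).trans (le_of_eq ?_)
          ring
        · apply Continuous.intervalIntegrable; fun_prop
        · apply Continuous.intervalIntegrable; fun_prop
  have lim : ∀ s t : unitInterval, Filter.Tendsto
      (fun n : ℕ => M * (C ^ n * |(t:ℝ) - s| ^ n / n.factorial)) Filter.atTop (nhds 0) := by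
    intro s t
    have := (FloorSemiring.tendsto_pow_div_factorial_atTop (C * |(t:ℝ) - s|)).const_mul M
    simpa [mul_pow] using this
  constructor
  · ext ⟨s, t⟩
    have : ‖P (s,t) - P' (s,t)‖ ≤ 0 := ge_of_tendsto' (lim s t) (fun n => (key n s t).1)
    exact sub_eq_zero.1 (norm_le_zero_iff.1 this)
  · ext ⟨s, t⟩
    have : ‖Q (s,t) - Q' (s,t)‖ ≤ 0 := ge_of_tendsto' (lim s t) (fun n => (key n s t).2)
    exact sub_eq_zero.1 (norm_le_zero_iff.1 this)

end generic

section generic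
variable {V : Type*} [NormedRing V] [NormedAlgebra ℂ V] [CompleteSpace V]
open Filter Topology

lemma exists_comp_analytic {a : ℂ → V} {x0 : ℂ} (ha : AnalyticAt ℂ a x0) :
    ∃ A : C(KK, ℂ) → C(KK, V), AnalyticAt ℂ A (ContinuousMap.const KK x0) ∧
      ∀ᶠ h in 𝓝 (ContinuousMap.const KK x0), ∀ k, A h k = a (h k) := by
  obtain ⟨p, r, hp⟩ := ha
  obtain ⟨ρ, hρ0, hρ⟩ := ENNReal.lt_iff_exists_nnreal_btwn.1 hp.r_pos
  have hρp : (ρ : ENNReal) < p.radius := lt_of_lt_of_le hρ hp.r_le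
  obtain ⟨C, hC0, hC⟩ := p.norm_mul_pow_le_of_lt_radius hρp
  let L : V → (C(KK, ℂ) →L[ℂ] C(KK, V)) := fun v =>
    (ContinuousLinearMap.toSpanSingleton ℂ v).compLeftContinuous ℂ KK
  have hL : ∀ v, ‖L v‖ ≤ ‖v‖ := by
    intro v
    refine ContinuousLinearMap.opNorm_le_bound _ (norm_nonneg _) ?_
    intro h
    rw [ContinuousMap.norm_le _ (by positivity)]
    intro k
    change ‖h k • v‖ ≤ _
    rw [norm_smul, mul_comm]
    gcongr
    exact h.norm_coe_le_norm k
  let q : FormalMultilinearSeries ℂ C(KK, ℂ) C(KK, V) := fun n =>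
    (L (p.coeff n)).compContinuousMultilinearMap (ContinuousMultilinearMap.mkPiAlgebraFin ℂ n C(KK, ℂ))
  have hq : ∀ n, ‖q n‖ ≤ ‖p n‖ := by
    intro n
    refine (ContinuousLinearMap.norm_compContinuousMultilinearMap_le _ _).trans ?_
    rw [ContinuousMultilinearMap.norm_mkPiAlgebraFin, mul_one]
    exact (hL _).trans (le_of_eq (FormalMultilinearSeries.norm_apply_eq_norm_coef).symm)
  have hrad : (ρ : ENNReal) ≤ q.radius := by
    apply q.le_radius_of_bound C
    intro n
    refine le_trans ?_ (hC n)
    gcongr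
    exact hq n
  have hqpos : 0 < q.radius := lt_of_lt_of_le (by exact_mod_cast hρ0) hrad
  have hqb := q.hasFPowerSeriesOnBall hqpos
  refine ⟨fun h => q.sum (h - ContinuousMap.const KK x0), ?_, ?_⟩
  · have h1 : AnalyticAt ℂ q.sum (ContinuousMap.const KK x0 - ContinuousMap.const KK x0) := by
      rw [sub_self]; exact hqb.analyticAt
    exact h1.comp (f := fun h => h - ContinuousMap.const KK x0) (by fun_prop)
  · have hb : Metric.eball (ContinuousMap.const KK x0) ρ ∈ 𝓝 (ContinuousMap.const KK x0) :=
      Metric.eball_mem_nhds _ (by exact_mod_cast hρ0)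
    filter_upwards [hb] with h hh k
    set y := h - ContinuousMap.const KK x0 with hy
    have hyn : ‖y‖ < ρ := by
      rw [Metric.eball_coe, Metric.mem_ball, dist_eq_norm] at hh
      exact hh
    have hs1 : HasSum (fun n => q n fun _ => y) (q.sum y) := by
      apply q.hasSum
      refine Metric.eball_subset_eball hrad ?_
      rw [Metric.eball_coe, Metric.mem_ball, dist_zero_right]
      exact hyn
    have hs2 := (ContinuousMap.evalCLM ℂ k).hasSum hs1
    have hyk : ‖y k‖ < ρ := (y.norm_coe_le_norm k).trans_lt hyn
    have hs3 : HasSum (fun n => p n fun _ => y k) (a (x0 + y k)) := by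
      apply hp.hasSum
      refine Metric.eball_subset_eball hρ.le ?_
      rw [Metric.eball_coe, Metric.mem_ball, dist_zero_right]
      exact hyk
    have e : x0 + y k = h k := by simp [hy]
    rw [e] at hs3
    refine hs2.unique ?_
    convert hs3 using 2 with n
    rw [FormalMultilinearSeries.apply_eq_pow_smul_coeff]
    simp only [q, L, ContinuousMap.evalCLM_apply, ContinuousLinearMap.compContinuousMultilinearMap_coe,
      Function.comp, ContinuousMultilinearMap.mkPiAlgebraFin_apply, List.ofFn_const, List.prod_replicate]
    change (y ^ n) k • p.coeff n = _
    simp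

/-- The local inverse: an analytic solution operator. -/
lemma exists_resolvent {E : Type*} [NormedAddCommGroup E] [NormedSpace ℂ E] [CompleteSpace E]
    (N : E → E) (hN : ContDiff ℂ ⊤ N) (y0 : E) :
    ∃ Ψ : ℂ × E → E, AnalyticAt ℂ Ψ (0, y0) ∧ ∀ᶠ x in 𝓝 ((0, y0) : ℂ × E),
        Ψ x = x.2 + x.1 • N (Ψ x) := by
  let Θ : ℂ × E → ℂ × E := fun x => (x.1, x.2 - x.1 • N x.2)
  have hΘ : ContDiff ℂ ⊤ Θ := by
    have h1 : ContDiff ℂ ⊤ (fun x : ℂ × E => x.1 • N x.2) :=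
      contDiff_fst.smul (hN.comp contDiff_snd)
    exact contDiff_fst.prodMk (contDiff_snd.sub h1)
  -- shear
  let S : E → (ℂ × E →L[ℂ] ℂ × E) := fun k =>
    (ContinuousLinearMap.fst ℂ ℂ E).prod
      (ContinuousLinearMap.snd ℂ ℂ E - (ContinuousLinearMap.fst ℂ ℂ E).smulRight k)
  have hS : ∀ k x, S k x = (x.1, x.2 - x.1 • k) := fun k x => rfl
  let D : (ℂ × E) ≃L[ℂ] (ℂ × E) := ContinuousLinearEquiv.equivOfInverse (S (N y0)) (S (-N y0))
    (by intro x; simp [hS]) (by intro x; simp [hS])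
  have hD : HasFDerivAt Θ (D : (ℂ × E) →L[ℂ] (ℂ × E)) (0, y0) := by
    have hNd : HasFDerivAt (fun x : ℂ × E => N x.2) ((fderiv ℂ N y0).comp (ContinuousLinearMap.snd ℂ ℂ E)) (0, y0) := by
      have : HasFDerivAt N (fderiv ℂ N y0) ((0, y0) : ℂ × E).2 :=
        ((hN.differentiable (by simp)) y0).hasFDerivAt
      exact this.comp _ hasFDerivAt_snd
    have h := (hasFDerivAt_fst (𝕜 := ℂ) (p := ((0, y0) : ℂ × E))).prodMk
      ((hasFDerivAt_snd (𝕜 := ℂ) (p := ((0, y0) : ℂ × E))).sub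
        ((hasFDerivAt_fst (𝕜 := ℂ) (p := ((0, y0) : ℂ × E))).smul hNd))
    refine h.congr_fderiv ?_
    ext x <;> simp [D, S]
  have hc : ContDiffAt ℂ ⊤ Θ (0, y0) := hΘ.contDiffAt
  have h00 : Θ (0, y0) = (0, y0) := by simp [Θ]
  have hloc := hc.to_localInverse hD (by simp)
  rw [h00] at hloc
  refine ⟨fun x => (hc.localInverse hD (by simp) x).2, ?_, ?_⟩
  · have : ContDiffAt ℂ ⊤ (fun x => (hc.localInverse hD (by simp) x).2) (0, y0) := hloc.snd
    exact this.analyticAt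
  · have hr := (hc.hasStrictFDerivAt' hD (by simp)).eventually_right_inverse
    rw [h00] at hr
    filter_upwards [hr] with x hx
    have hx' : Θ (hc.localInverse hD (by simp) x) = x := hx
    set y := hc.localInverse hD (by simp) x with hy
    have e1 : (Θ y).1 = x.1 := by rw [hx']
    change y.1 = x.1 at e1
    have e2 : (Θ y).2 = x.2 := by rw [hx']
    change y.2 - y.1 • N y.2 = x.2 at e2
    rw [e1, sub_eq_iff_eq_add] at e2
    exact e2

lemma exists_solution_operator (P0 Q0 : C(KK, V)) :
    ∃ Ψ : ℂ × C(KK, V) × C(KK, V) → C(KK, V) × C(KK, V),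
      AnalyticAt ℂ Ψ (0, P0, Q0) ∧ ∀ᶠ x in 𝓝 ((0, P0, Q0) : ℂ × C(KK, V) × C(KK, V)),
        (Ψ x).1 = x.2.1 + x.1 • volT ((Ψ x).1 * (Ψ x).2 - (Ψ x).2 * (Ψ x).1) ∧
        (Ψ x).2 = x.2.2 + x.1 • volS ((Ψ x).1 * (Ψ x).2 - (Ψ x).2 * (Ψ x).1) := by
  have hN : ContDiff ℂ ⊤ (fun y : C(KK, V) × C(KK, V) =>
      (volT (y.1 * y.2 - y.2 * y.1), volS (y.1 * y.2 - y.2 * y.1))) := by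
    have h0 : ContDiff ℂ ⊤ (fun y : C(KK, V) × C(KK, V) => y.1 * y.2 - y.2 * y.1) :=
      (contDiff_fst.mul contDiff_snd).sub (contDiff_snd.mul contDiff_fst)
    exact (volT.contDiff.comp h0).prodMk (volS.contDiff.comp h0)
  obtain ⟨Ψ, h1, h2⟩ := exists_resolvent _ hN (P0, Q0)
  refine ⟨Ψ, h1, ?_⟩
  filter_upwards [h2] with x hx
  exact ⟨congrArg Prod.fst hx, congrArg Prod.snd hx⟩

/-- segment functions in the Banach algebra -/
def sgK (i : C(KK, ℂ)) (x : ℂ × ℂ) : C(KK, ℂ) := x.1 • 1 + (x.2 - x.1) • i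
def iS : C(KK, ℂ) := ⟨fun k => ((k.1 : ℝ) : ℂ), by fun_prop⟩
def iT : C(KK, ℂ) := ⟨fun k => ((k.2 : ℝ) : ℂ), by fun_prop⟩

lemma sgK_analytic (i : C(KK, ℂ)) (x : ℂ × ℂ) : AnalyticAt ℂ (sgK i) x := by
  exact (analyticAt_fst.smul analyticAt_const).add
    ((analyticAt_snd.sub analyticAt_fst).smul analyticAt_const)

lemma sgK_diag (i : C(KK, ℂ)) (x0 : ℂ) : sgK i (x0, x0) = ContinuousMap.const KK x0 := by
  ext k; simp [sgK]

theorem exists_local_solution {a b : ℂ → V} {x0 : ℂ} (c : ℂ) (ha : AnalyticAt ℂ a x0)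
    (hb : AnalyticAt ℂ b x0) : ∃ P Q : ℂ × ℂ → C(KK, V),
      AnalyticAt ℂ P (x0, x0) ∧ AnalyticAt ℂ Q (x0, x0) ∧
      ∀ᶠ x in 𝓝 ((x0, x0) : ℂ × ℂ), IsSol a b c x.1 x.2 (P x) (Q x) := by
  obtain ⟨A, hA, hA'⟩ := exists_comp_analytic ha
  obtain ⟨B, hB, hB'⟩ := exists_comp_analytic hb
  rw [← sgK_diag iS x0] at hA hA'
  rw [← sgK_diag iT x0] at hB hB'
  have hAc := hA.comp (sgK_analytic iS (x0, x0))
  have hBc := hB.comp (sgK_analytic iT (x0, x0))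
  obtain ⟨Ψ, hΨ, hΨ'⟩ := exists_solution_operator (A (sgK iS (x0, x0))) (B (sgK iT (x0, x0)))
  let g : ℂ × ℂ → ℂ × C(KK, V) × C(KK, V) := fun x => (c * (x.2 - x.1), A (sgK iS x), B (sgK iT x))
  have hg : AnalyticAt ℂ g (x0, x0) := by
    exact AnalyticAt.prod (analyticAt_const.mul (analyticAt_snd.sub analyticAt_fst)) (hAc.prod hBc)
  have hg0 : g (x0, x0) = (0, A (sgK iS (x0, x0)), B (sgK iT (x0, x0))) := by simp [g]
  rw [← hg0] at hΨ hΨ'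
  have hc := hΨ.comp hg
  refine ⟨fun x => (Ψ (g x)).1, fun x => (Ψ (g x)).2, ?_, ?_, ?_⟩
  · exact (analyticAt_fst.comp hc :)
  · exact (analyticAt_snd.comp hc :)
  · filter_upwards [hg.continuousAt.eventually hΨ',
      (sgK_analytic iS (x0, x0)).continuousAt.eventually hA',
      (sgK_analytic iT (x0, x0)).continuousAt.eventually hB'] with x h1 h2 h3 s t
    constructor
    · conv_lhs => rw [h1.1]
      rw [ContinuousMap.add_apply, ContinuousMap.smul_apply]
      congr 1
      rw [h2 (s, t)]
      congr 1
      simp [sgK, iS, seg]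
      ring
    · conv_lhs => rw [h1.2]
      rw [ContinuousMap.add_apply, ContinuousMap.smul_apply]
      congr 1
      rw [h3 (s, t)]
      congr 1
      simp [sgK, iT, seg]
      ring

end generic

section generic
variable {V : Type*} [NormedRing V] [NormedAlgebra ℂ V] [CompleteSpace V]
open Filter Topology

def rho (s0 t0 : unitInterval) (s : ℝ) : unitInterval := pI ((s0 : ℝ) + ((t0 : ℝ) - s0) * s)

lemma continuous_rho (s0 t0 : unitInterval) : Continuous (rho s0 t0) := by
  unfold rho
  exact continuous_pI.comp (by fun_prop)

lemma coe_rho (s0 t0 : unitInterval) {s : ℝ} (hs : s ∈ Set.Icc (0:ℝ) 1) :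
    ((rho s0 t0 s : unitInterval) : ℝ) = (s0 : ℝ) + ((t0 : ℝ) - s0) * s := by
  apply coe_pI
  have h1 := s0.2
  have h2 := t0.2
  constructor
  · nlinarith [h1.1, h2.1, hs.1, hs.2]
  · nlinarith [h1.2, h2.2, hs.1, hs.2]

def rhoK (s0 t0 : unitInterval) : C(KK, KK) :=
  ⟨fun k => (rho s0 t0 k.1, rho s0 t0 k.2), by
    have := continuous_rho s0 t0
    fun_prop⟩

lemma seg_seg (z w : ℂ) (s0 t0 s : ℝ) :
    seg (seg z w s0) (seg z w t0) s = seg z w (s0 + (t0 - s0) * s) := by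
  simp [seg]; ring

lemma mem_unit_of_uIcc {τ s t : ℝ} (hs : s ∈ Set.Icc (0:ℝ) 1) (ht : t ∈ Set.Icc (0:ℝ) 1)
    (h : τ ∈ Set.uIcc s t) : τ ∈ Set.Icc (0:ℝ) 1 :=
  (Set.OrdConnected.uIcc_subset Set.ordConnected_Icc hs ht) h

lemma IsSol.restrict {a b : ℂ → V} {c z w : ℂ} {P Q : C(KK, V)}
    (h : IsSol a b c z w P Q) (s0 t0 : unitInterval) :
    IsSol a b c (seg z w s0) (seg z w t0) (P.comp (rhoK s0 t0)) (Q.comp (rhoK s0 t0)) := by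
  have key : ∀ (g : ℝ → V) (s t : unitInterval),
      (c * (w - z)) • (∫ τ in (rho s0 t0 s : ℝ)..(rho s0 t0 t : ℝ), g τ) =
      (c * (seg z w t0 - seg z w s0)) • ∫ τ in (s : ℝ)..(t : ℝ), g ((s0 : ℝ) + ((t0:ℝ) - s0) * τ) := by
    intro g s t
    rw [coe_rho _ _ s.2, coe_rho _ _ t.2,
      ← intervalIntegral.smul_integral_comp_add_mul g ((t0:ℝ) - s0) (s0 : ℝ)]
    rw [← Complex.coe_smul, smul_smul]
    congr 1
    simp [seg]; ring
  intro s t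
  obtain ⟨h1, h2⟩ := h (rho s0 t0 s) (rho s0 t0 t)
  constructor
  · change P (rho s0 t0 s, rho s0 t0 t) = _
    rw [h1, seg_seg, coe_rho _ _ s.2, volT_apply, key, volT_apply]
    congr 2
    apply intervalIntegral.integral_congr
    intro τ hτ
    have hm := mem_unit_of_uIcc s.2 t.2 hτ
    have : rho s0 t0 (pI τ : ℝ) = pI ((s0:ℝ) + ((t0:ℝ) - s0) * τ) := by rw [coe_pI hm]; rfl
    simp only [← this]
    rfl
  · change Q (rho s0 t0 s, rho s0 t0 t) = _
    rw [h2, seg_seg, coe_rho _ _ t.2, volS_apply, key, volS_apply]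
    congr 2
    apply intervalIntegral.integral_congr
    intro τ hτ
    have hm := mem_unit_of_uIcc t.2 s.2 hτ
    have : rho s0 t0 (pI τ : ℝ) = pI ((s0:ℝ) + ((t0:ℝ) - s0) * τ) := by rw [coe_pI hm]; rfl
    simp only [← this]
    rfl

open Classical in
/-- canonical solution -/
def cpq (a b : ℂ → V) (c : ℂ) (x : ℂ × ℂ) : C(KK, V) × C(KK, V) :=
  if h : ∃ R : C(KK, V) × C(KK, V), IsSol a b c x.1 x.2 R.1 R.2 then h.choose else 0

lemma cpq_eq {a b : ℂ → V} {c : ℂ} {x : ℂ × ℂ} {P Q : C(KK, V)}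
    (h : IsSol a b c x.1 x.2 P Q) : cpq a b c x = (P, Q) := by
  have h' : ∃ R : C(KK, V) × C(KK, V), IsSol a b c x.1 x.2 R.1 R.2 := ⟨(P, Q), h⟩
  have e : cpq a b c x = h'.choose := by unfold cpq; rw [dif_pos h']
  rw [e]
  have := h'.choose_spec.unique h
  exact Prod.ext this.1 this.2

def cp (a b : ℂ → V) (c : ℂ) (x : ℂ × ℂ) : V := (cpq a b c x).1 (0, 1)
def cq (a b : ℂ → V) (c : ℂ) (x : ℂ × ℂ) : V := (cpq a b c x).2 (0, 1)
def cf (φ a b : ℂ → V) (c : ℂ) (x : ℂ × ℂ) : V :=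
  φ x.1 + (x.2 - x.1) • volT (cpq a b c x).2 (0, 1)

lemma IsSol.cp_seg {a b : ℂ → V} {c z w : ℂ} {P Q : C(KK, V)}
    (h : IsSol a b c z w P Q) (s t : unitInterval) :
    cp a b c (seg z w s, seg z w t) = P (s, t) ∧ cq a b c (seg z w s, seg z w t) = Q (s, t) := by
  have h' := cpq_eq (x := (seg z w s, seg z w t)) (h.restrict s t)
  have e0 : rho s t ((0 : unitInterval) : ℝ) = s := by
    apply Subtype.ext; rw [coe_rho _ _ (0 : unitInterval).2]; simp
  have e1 : rho s t ((1 : unitInterval) : ℝ) = t := by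
    apply Subtype.ext; rw [coe_rho _ _ (1 : unitInterval).2]; simp
  constructor
  · unfold cp
    rw [h']
    change P (rho s t ((0 : unitInterval) : ℝ), rho s t ((1 : unitInterval) : ℝ)) = _
    rw [e0, e1]
  · unfold cq
    rw [h']
    change Q (rho s t ((0 : unitInterval) : ℝ), rho s t ((1 : unitInterval) : ℝ)) = _
    rw [e0, e1]

def brk (X Y : V) : V := X * Y - Y * X

lemma seg_zero (z w : ℂ) : seg z w 0 = z := by simp [seg]
lemma seg_one (z w : ℂ) : seg z w 1 = w := by simp [seg]

lemma IsSol.eqs {φ a b : ℂ → V} {c z w : ℂ} {P Q : C(KK, V)}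
    (h : IsSol a b c z w P Q) :
    cp a b c (z, w) = a z + c • ((w - z) • ∫ τ in (0:ℝ)..1,
      brk (cp a b c (z, seg z w τ)) (cq a b c (z, seg z w τ))) ∧
    cq a b c (z, w) = b w + c • ((z - w) • ∫ τ in (0:ℝ)..1,
      brk (cp a b c (seg w z τ, w)) (cq a b c (seg w z τ, w))) ∧
    cf φ a b c (z, w) = φ z + (w - z) • ∫ τ in (0:ℝ)..1, cq a b c (z, seg z w τ) := by
  have h01 := h.cp_seg 0 1
  have hs := h 0 1
  have c0 : ((0 : unitInterval) : ℝ) = 0 := rfl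
  have c1 : ((1 : unitInterval) : ℝ) = 1 := rfl
  have hT : ∀ τ ∈ Set.uIcc (0:ℝ) 1, cp a b c (z, seg z w τ) = P (0, pI τ) ∧
      cq a b c (z, seg z w τ) = Q (0, pI τ) := by
    intro τ hτ
    rw [Set.uIcc_of_le zero_le_one] at hτ
    have := h.cp_seg 0 (pI τ)
    rwa [coe_pI hτ, c0, seg_zero] at this
  have hS : ∀ τ ∈ Set.uIcc (0:ℝ) 1, cp a b c (seg z w τ, w) = P (pI τ, 1) ∧
      cq a b c (seg z w τ, w) = Q (pI τ, 1) := by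
    intro τ hτ
    rw [Set.uIcc_of_le zero_le_one] at hτ
    have := h.cp_seg (pI τ) 1
    rwa [coe_pI hτ, c1, seg_one] at this
  rw [c0, c1, seg_zero, seg_one] at h01 hs
  refine ⟨?_, ?_, ?_⟩
  · rw [h01.1, hs.1, volT_apply, smul_smul, c0, c1]
    congr 2
    apply intervalIntegral.integral_congr
    intro τ hτ
    simp only [(hT τ hτ).1, (hT τ hτ).2]
    rfl
  · rw [h01.2, hs.2, volS_apply, smul_smul, c0, c1, intervalIntegral.integral_symm, smul_neg, ← neg_smul]
    congr 1
    congr 1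
    · ring
    · have := intervalIntegral.integral_comp_sub_left (a := 0) (b := 1)
        (fun τ => brk (cp a b c (seg z w τ, w)) (cq a b c (seg z w τ, w))) 1
      have e : ∀ τ : ℝ, seg z w (1 - τ) = seg w z τ := by intro τ; simp [seg]; ring
      simp only [e] at this
      rw [this]
      simp only [sub_self, sub_zero]
      apply intervalIntegral.integral_congr
      intro τ hτ
      simp only [(hS τ hτ).1, (hS τ hτ).2]
      rfl
  · unfold cf
    rw [cpq_eq (x := (z, w)) h, volT_apply, c0, c1]
    congr 2
    apply intervalIntegral.integral_congr
    intro τ hτ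
    simp only [(hT τ hτ).2]

lemma hasDerivAt_seg_integral {G : ℂ → V} {x0 : ℂ} {r : ℝ}
    (hG : DifferentiableOn ℂ G (Metric.ball x0 r)) {z w : ℂ} (hz : z ∈ Metric.ball x0 r)
    (hw : w ∈ Metric.ball x0 r) :
    HasDerivAt (fun w => (w - z) • ∫ τ in (0:ℝ)..1, G (seg z w τ)) (G w) w := by
  obtain ⟨Γ, hΓ⟩ := hG.isExactOn_ball
  have hcont : ContinuousOn G (Metric.ball x0 r) := hG.continuousOn
  have key : ∀ w ∈ Metric.ball x0 r, (w - z) • ∫ τ in (0:ℝ)..1, G (seg z w τ) = Γ w - Γ z := by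
    intro w hw
    have hseg : ∀ τ ∈ Set.uIcc (0:ℝ) 1, seg z w τ ∈ Metric.ball x0 r := by
      intro τ hτ
      rw [Set.uIcc_of_le zero_le_one] at hτ
      have := (convex_ball x0 r).add_smul_sub_mem hz hw hτ
      simpa [seg] using this
    have hd : ∀ τ ∈ Set.uIcc (0:ℝ) 1, HasDerivAt (fun τ : ℝ => Γ (seg z w τ)) ((w - z) • G (seg z w τ)) τ := by
      intro τ hτ
      have h1 := hΓ _ (hseg τ hτ)
      have h2 : HasDerivAt (fun τ : ℝ => seg z w τ) (w - z) τ := by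
        have := ((Complex.ofRealCLM.hasDerivAt (x := τ)).mul_const (w - z)).const_add z
        simpa [seg] using this
      exact h1.scomp τ h2
    have hc : ContinuousOn (fun τ : ℝ => (w - z) • G (seg z w τ)) (Set.uIcc 0 1) := by
      apply ContinuousOn.const_smul
      apply hcont.comp _ hseg
      unfold seg
      fun_prop
    have := intervalIntegral.integral_eq_sub_of_hasDerivAt hd hc.intervalIntegrable
    rw [intervalIntegral.integral_smul, seg_zero, seg_one] at this
    exact this
  have h := (hΓ w hw).sub_const (Γ z)
  refine h.congr_of_eventuallyEq ?_
  filter_upwards [Metric.isOpen_ball.mem_nhds hw] with w' hw'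
  exact key w' hw'

end generic

section generic
variable {V : Type*} [NormedRing V] [NormedAlgebra ℂ V] [CompleteSpace V]
open Filter Topology

/-- local package -/
structure Pkg (φ a b : ℂ → V) (c : ℂ) (x : ℂ × ℂ) : Prop where
  sol : ∃ P Q : C(KK, V), IsSol a b c x.1 x.2 P Q
  anp : AnalyticAt ℂ (cp a b c) x
  anq : AnalyticAt ℂ (cq a b c) x
  anf : AnalyticAt ℂ (cf φ a b c) x
  pw : HasDerivAt (fun w => cp a b c (x.1, w)) (c • brk (cp a b c x) (cq a b c x)) x.2
  qz : HasDerivAt (fun z => cq a b c (z, x.2)) (c • brk (cp a b c x) (cq a b c x)) x.1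
  fw : HasDerivAt (fun w => cf φ a b c (x.1, w)) (cq a b c x) x.2
  fz : HasDerivAt (fun z => cf φ a b c (z, x.2)) (cp a b c x) x.1

lemma hasDerivAt_left {f : ℂ × ℂ → V} {x : ℂ × ℂ} (h : DifferentiableAt ℂ f x) :
    HasDerivAt (fun z => f (z, x.2)) (fderiv ℂ f x (1, 0)) x.1 := by
  have h1 : HasDerivAt (fun z : ℂ => (z, x.2)) (1, 0) x.1 := (hasDerivAt_id _).prodMk (hasDerivAt_const _ _)
  exact (h.hasFDerivAt (x := (x.1, x.2))).comp_hasDerivAt x.1 h1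

lemma hasDerivAt_right {f : ℂ × ℂ → V} {x : ℂ × ℂ} (h : DifferentiableAt ℂ f x) :
    HasDerivAt (fun w => f (x.1, w)) (fderiv ℂ f x (0, 1)) x.2 := by
  have h1 : HasDerivAt (fun w : ℂ => (x.1, w)) (0, 1) x.2 := (hasDerivAt_const _ _).prodMk (hasDerivAt_id _)
  exact (h.hasFDerivAt (x := (x.1, x.2))).comp_hasDerivAt x.2 h1

lemma cp_diag (a b : ℂ → V) (c z : ℂ) (h : ∃ P Q : C(KK, V), IsSol a b c z z P Q) :
    cp a b c (z, z) = a z ∧ cq a b c (z, z) = b z := by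
  obtain ⟨P, Q, h⟩ := h
  have := h.eqs (φ := 0)
  constructor
  · rw [this.1]; simp
  · rw [this.2.1]; simp

lemma cf_diag (φ a b : ℂ → V) (c z : ℂ) : cf φ a b c (z, z) = φ z := by simp [cf]

lemma eventually_pkg {φ a b : ℂ → V} {x0 : ℂ} (c : ℂ) (hφ : AnalyticAt ℂ φ x0)
    (ha : AnalyticAt ℂ a x0) (hb : AnalyticAt ℂ b x0)
    (hab : ∀ᶠ z in 𝓝 x0, HasDerivAt φ (a z + b z) z) :
    ∃ r > 0, ∀ x ∈ Metric.ball ((x0, x0) : ℂ × ℂ) r, Pkg φ a b c x := by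
  obtain ⟨P, Q, hP, hQ, hs⟩ := exists_local_solution c ha hb
  have ev : ∀ k : KK, AnalyticAt ℂ (fun x => P x k) (x0, x0) ∧ AnalyticAt ℂ (fun x => Q x k) (x0, x0) := by
    intro k
    have h := fun y => (ContinuousMap.evalCLM ℂ (M := V) k).analyticAt y
    exact ⟨((h (P (x0,x0))).comp hP :), ((h (Q (x0,x0))).comp hQ :)⟩
  have hp : AnalyticAt ℂ (cp a b c) (x0, x0) := by
    refine (ev (0, 1)).1.congr ?_
    filter_upwards [hs] with x hx
    simp only [cp, cpq_eq hx]
  have hq : AnalyticAt ℂ (cq a b c) (x0, x0) := by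
    refine (ev (0, 1)).2.congr ?_
    filter_upwards [hs] with x hx
    simp only [cq, cpq_eq hx]
  have hf : AnalyticAt ℂ (cf φ a b c) (x0, x0) := by
    have h1 : AnalyticAt ℂ (fun x => volT (Q x) (0, 1)) (x0, x0) := by
      have h := fun y => ((ContinuousMap.evalCLM ℂ (M := V) ((0, 1) : KK)).comp volT).analyticAt y
      exact ((h (Q (x0,x0))).comp hQ :)
    have h2 : AnalyticAt ℂ (fun x : ℂ × ℂ => φ x.1) (x0, x0) :=
      AnalyticAt.comp (g := φ) (f := Prod.fst) (x := (x0, x0)) hφ analyticAt_fst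
    have h3 : AnalyticAt ℂ (fun x : ℂ × ℂ => φ x.1 + (x.2 - x.1) • volT (Q x) (0, 1)) (x0, x0) :=
      h2.add ((analyticAt_snd.sub analyticAt_fst).smul h1)
    refine h3.congr ?_
    filter_upwards [hs] with x hx
    simp only [cf, cpq_eq hx]
  have hdiag : ∀ᶠ x in 𝓝 ((x0, x0) : ℂ × ℂ), HasDerivAt φ (a x.1 + b x.1) x.1 :=
    (continuous_fst.tendsto ((x0, x0) : ℂ × ℂ)).eventually hab
  obtain ⟨r, hr, H⟩ := Metric.eventually_nhds_iff_ball.1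
    (hs.and (hp.eventually_analyticAt.and (hq.eventually_analyticAt.and
      (hf.eventually_analyticAt.and hdiag))))
  refine ⟨r, hr, ?_⟩
  have mem : ∀ z w : ℂ, ((z, w) : ℂ × ℂ) ∈ Metric.ball ((x0, x0) : ℂ × ℂ) r ↔
      z ∈ Metric.ball x0 r ∧ w ∈ Metric.ball x0 r := by
    intro z w
    rw [← ball_prod_same]; rfl
  set p := cp a b c with hpdef
  set q := cq a b c with hqdef
  set f := cf φ a b c with hfdef
  have dl : ∀ g : ℂ × ℂ → V, ∀ z w : ℂ, AnalyticAt ℂ g (z, w) →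
      DifferentiableAt ℂ (fun z => g (z, w)) z ∧ DifferentiableAt ℂ (fun w => g (z, w)) w := by
    intro g z w hg
    exact ⟨(hasDerivAt_left hg.differentiableAt).differentiableAt,
      (hasDerivAt_right hg.differentiableAt).differentiableAt⟩
  have hpw : ∀ x ∈ Metric.ball ((x0, x0) : ℂ × ℂ) r,
      HasDerivAt (fun w => p (x.1, w)) (c • brk (p x) (q x)) x.2 := by
    rintro ⟨z, w⟩ hx
    have hx' := (mem _ _).1 hx
    have hG : DifferentiableOn ℂ (fun w => brk (p (z, w)) (q (z, w))) (Metric.ball x0 r) := by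
      intro w hw
      have hm := H (z, w) ((mem _ _).2 ⟨hx'.1, hw⟩)
      have d1 := (dl p z w hm.2.1).2
      have d2 := (dl q z w hm.2.2.1).2
      exact ((d1.mul d2).sub (d2.mul d1)).differentiableWithinAt
    have := ((hasDerivAt_seg_integral hG hx'.1 hx'.2).const_smul c).const_add (a z)
    refine this.congr_of_eventuallyEq ?_
    filter_upwards [Metric.isOpen_ball.mem_nhds hx'.2] with w' hw'
    exact ((H (z, w') ((mem _ _).2 ⟨hx'.1, hw'⟩)).1.eqs (φ := φ)).1
  have hqz : ∀ x ∈ Metric.ball ((x0, x0) : ℂ × ℂ) r,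
      HasDerivAt (fun z => q (z, x.2)) (c • brk (p x) (q x)) x.1 := by
    rintro ⟨z, w⟩ hx
    have hx' := (mem _ _).1 hx
    have hG : DifferentiableOn ℂ (fun z => brk (p (z, w)) (q (z, w))) (Metric.ball x0 r) := by
      intro z hz
      have hm := H (z, w) ((mem _ _).2 ⟨hz, hx'.2⟩)
      have d1 := (dl p z w hm.2.1).1
      have d2 := (dl q z w hm.2.2.1).1
      exact ((d1.mul d2).sub (d2.mul d1)).differentiableWithinAt
    have := ((hasDerivAt_seg_integral hG hx'.2 hx'.1).const_smul c).const_add (b w)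
    refine this.congr_of_eventuallyEq ?_
    filter_upwards [Metric.isOpen_ball.mem_nhds hx'.1] with z' hz'
    exact ((H (z', w) ((mem _ _).2 ⟨hz', hx'.2⟩)).1.eqs (φ := φ)).2.1
  have hfw : ∀ x ∈ Metric.ball ((x0, x0) : ℂ × ℂ) r,
      HasDerivAt (fun w => f (x.1, w)) (q x) x.2 := by
    rintro ⟨z, w⟩ hx
    have hx' := (mem _ _).1 hx
    have hG : DifferentiableOn ℂ (fun w => q (z, w)) (Metric.ball x0 r) := by
      intro w hw
      have hm := H (z, w) ((mem _ _).2 ⟨hx'.1, hw⟩)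
      exact ((dl q z w hm.2.2.1).2).differentiableWithinAt
    have := (hasDerivAt_seg_integral hG hx'.1 hx'.2).const_add (φ z)
    refine this.congr_of_eventuallyEq ?_
    filter_upwards [Metric.isOpen_ball.mem_nhds hx'.2] with w' hw'
    exact ((H (z, w') ((mem _ _).2 ⟨hx'.1, hw'⟩)).1.eqs (φ := φ)).2.2
  have hfz : ∀ x ∈ Metric.ball ((x0, x0) : ℂ × ℂ) r,
      HasDerivAt (fun z => f (z, x.2)) (p x) x.1 := by
    -- partial derivative as analytic function
    let D : ℂ × ℂ → V := fun x => fderiv ℂ f x (1, 0)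
    let Dw : ℂ × ℂ → V := fun x => fderiv ℂ f x (0, 1)
    have hDw : ∀ x ∈ Metric.ball ((x0, x0) : ℂ × ℂ) r, Dw x = q x := by
      intro x hx
      exact (hasDerivAt_right (H x hx).2.2.2.1.differentiableAt).unique (hfw x hx)
    have hf2 : ∀ x ∈ Metric.ball ((x0, x0) : ℂ × ℂ) r, DifferentiableAt ℂ (fderiv ℂ f) x := by
      intro x hx
      exact (H x hx).2.2.2.1.fderiv.differentiableAt
    have hDd : ∀ x ∈ Metric.ball ((x0, x0) : ℂ × ℂ) r,
        HasDerivAt (fun w => D (x.1, w)) (c • brk (p x) (q x)) x.2 := by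
      intro x hx
      have h2 := (hf2 x hx).hasFDerivAt
      have hD1 : HasFDerivAt D ((ContinuousLinearMap.apply ℂ V ((1, 0) : ℂ × ℂ)).comp (fderiv ℂ (fderiv ℂ f) x)) x :=
        (ContinuousLinearMap.apply ℂ V ((1, 0) : ℂ × ℂ)).hasFDerivAt.comp x h2
      have hD2 : HasFDerivAt Dw ((ContinuousLinearMap.apply ℂ V ((0, 1) : ℂ × ℂ)).comp (fderiv ℂ (fderiv ℂ f) x)) x :=
        (ContinuousLinearMap.apply ℂ V ((0, 1) : ℂ × ℂ)).hasFDerivAt.comp x h2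
      have hsym : IsSymmSndFDerivAt ℂ f x :=
        (H x hx).2.2.2.1.contDiffAt.isSymmSndFDerivAt_of_omega
      have e1 := hasDerivAt_right hD1.differentiableAt
      have e2 := hasDerivAt_left hD2.differentiableAt
      rw [hD1.fderiv] at e1
      rw [hD2.fderiv] at e2
      have e3 : HasDerivAt (fun z => Dw (z, x.2)) (c • brk (p x) (q x)) x.1 := by
        refine (hqz x hx).congr_of_eventuallyEq ?_
        have hx' := (mem x.1 x.2).1 hx
        filter_upwards [Metric.isOpen_ball.mem_nhds hx'.1] with z' hz'
        exact hDw (z', x.2) ((mem _ _).2 ⟨hz', hx'.2⟩)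
      have e4 := e2.unique e3
      convert e1 using 1
      rw [← e4]
      exact hsym _ _
    rintro ⟨z, w⟩ hx
    have hx' := (mem _ _).1 hx
    have hzz : ((z, z) : ℂ × ℂ) ∈ Metric.ball ((x0, x0) : ℂ × ℂ) r := (mem _ _).2 ⟨hx'.1, hx'.1⟩
    have hconst : D (z, w) - p (z, w) = D (z, z) - p (z, z) := by
      have hd : ∀ w ∈ Metric.ball x0 r, HasDerivAt (fun w => D (z, w) - p (z, w)) 0 w := by
        intro w hw
        have hm := (mem _ _).2 ⟨hx'.1, hw⟩
        have := (hDd _ hm).sub (hpw _ hm)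
        simp only [sub_self] at this
        exact this
      apply Metric.isOpen_ball.is_const_of_deriv_eq_zero (𝕜 := ℂ) (s := Metric.ball x0 r)
        (convex_ball x0 r).isPreconnected (f := fun w => D (z, w) - p (z, w))
        (fun w hw => (hd w hw).differentiableAt.differentiableWithinAt)
        (fun w hw => (hd w hw).deriv) hx'.2 hx'.1
    have hdg : D (z, z) = a z := by
      have h1 : HasDerivAt (fun z => f (z, z)) (fderiv ℂ f (z, z) (1, 1)) z := by
        have h1 : HasDerivAt (fun z : ℂ => (z, z)) (1, 1) z := (hasDerivAt_id _).prodMk (hasDerivAt_id _)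
        exact HasFDerivAt.comp_hasDerivAt (f := fun z : ℂ => (z, z)) z
          ((H (z, z) hzz).2.2.2.1.differentiableAt.hasFDerivAt) h1
      have h2 : (fun z => f (z, z)) = φ := by
        funext z; exact cf_diag φ a b c z
      rw [h2] at h1
      have h3 := h1.unique (H (z, z) hzz).2.2.2.2
      have h4 : ((1, 1) : ℂ × ℂ) = (1, 0) + (0, 1) := by simp
      rw [h4, map_add] at h3
      have h5 : fderiv ℂ f (z, z) (0, 1) = b z := by
        rw [← (cp_diag a b c z ⟨_, _, (H (z, z) hzz).1⟩).2]
        exact hDw _ hzz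
      rw [h5] at h3
      exact add_right_cancel h3
    have hpd : p (z, z) = a z := (cp_diag a b c z ⟨_, _, (H (z, z) hzz).1⟩).1
    rw [hdg, hpd, sub_self, sub_eq_zero] at hconst
    rw [← hconst]
    exact hasDerivAt_left (H (z, w) hx).2.2.2.1.differentiableAt
  intro x hx
  exact ⟨⟨_, _, (H x hx).1⟩, (H x hx).2.1, (H x hx).2.2.1, (H x hx).2.2.2.1, hpw x hx, hqz x hx, hfw x hx, hfz x hx⟩

end generic

section generic
variable {V : Type*} [NormedRing V] [NormedAlgebra ℂ V] [CompleteSpace V]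
open Filter Topology

lemma IsSol.conj {a b : ℂ → V} {c z w : ℂ} {P Q : C(KK, V)}
    (h : IsSol a b c z w P Q) (σ : V →L[ℝ] V) (hσb : ∀ X Y, σ (brk X Y) = brk (σ X) (σ Y))
    (hσ : ∀ (l : ℂ) X, σ (l • X) = (starRingEnd ℂ l) • σ X) (hc : starRingEnd ℂ c = -c)
    (hb : ∀ s ∈ Set.Icc (0:ℝ) 1, b (starRingEnd ℂ (seg z w s)) = σ (a (seg z w s)))
    (ha : ∀ s ∈ Set.Icc (0:ℝ) 1, a (starRingEnd ℂ (seg z w s)) = σ (b (seg z w s))) :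
    cp a b c (starRingEnd ℂ w, starRingEnd ℂ z) = σ (cq a b c (z, w)) ∧
    cq a b c (starRingEnd ℂ w, starRingEnd ℂ z) = σ (cp a b c (z, w)) := by
  let R : C(KK, KK) := ⟨fun k => (unitInterval.symm k.2, unitInterval.symm k.1), by fun_prop⟩
  let σC : C(V, V) := ⟨σ, σ.continuous⟩
  let P' : C(KK, V) := σC.comp (Q.comp R)
  let Q' : C(KK, V) := σC.comp (P.comp R)
  have hP' : ∀ s t : unitInterval, P' (s, t) = σ (Q (unitInterval.symm t, unitInterval.symm s)) :=
    fun _ _ => rfl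
  have hQ' : ∀ s t : unitInterval, Q' (s, t) = σ (P (unitInterval.symm t, unitInterval.symm s)) :=
    fun _ _ => rfl
  have hseg : ∀ s : unitInterval, seg (starRingEnd ℂ w) (starRingEnd ℂ z) s =
      starRingEnd ℂ (seg z w (unitInterval.symm s : ℝ)) := by
    intro s
    simp [seg, unitInterval.coe_symm_eq]; ring
  have hint : ∀ (g : ℝ → V) (x y : ℝ), Continuous g →
      σ ((c * (w - z)) • ∫ τ in (1 - x)..(1 - y), g τ) =
      (c * (starRingEnd ℂ z - starRingEnd ℂ w)) • ∫ τ in x..y, - σ (g (1 - τ)) := by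
    intro g x y hg
    rw [hσ, ← ContinuousLinearMap.intervalIntegral_comp_comm _ (hg.intervalIntegrable _ _)]
    rw [intervalIntegral.integral_neg, intervalIntegral.integral_comp_sub_left (fun τ => σ (g τ)),
      intervalIntegral.integral_symm (1 - x), smul_neg, smul_neg]
    have e : starRingEnd ℂ (c * (w - z)) = c * (starRingEnd ℂ z - starRingEnd ℂ w) := by
      rw [map_mul, hc, map_sub]; ring
    rw [e, neg_neg]
  have hpIs : ∀ τ ∈ Set.Icc (0:ℝ) 1, pI (1 - τ) = unitInterval.symm (pI τ) := by
    intro τ hτ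
    apply Subtype.ext
    rw [unitInterval.coe_symm_eq, coe_pI hτ, coe_pI]
    exact ⟨by linarith [hτ.2], by linarith [hτ.1]⟩
  have cI := continuous_pI
  have sol : IsSol a b c (starRingEnd ℂ w) (starRingEnd ℂ z) P' Q' := by
    intro s t
    obtain ⟨-, h2⟩ := h (unitInterval.symm t) (unitInterval.symm s)
    obtain ⟨h1, -⟩ := h (unitInterval.symm t) (unitInterval.symm s)
    constructor
    · rw [hP', h2, map_add, hseg, ha _ (unitInterval.symm s).2, volS_apply, volT_apply,
        unitInterval.coe_symm_eq, unitInterval.coe_symm_eq, hint]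
      · congr 2
        apply intervalIntegral.integral_congr
        intro τ hτ
        have hm := mem_unit_of_uIcc s.2 t.2 hτ
        have := hσb (P (unitInterval.symm (pI τ), unitInterval.symm s)) (Q (unitInterval.symm (pI τ), unitInterval.symm s))
        simp only [hpIs τ hm, ContinuousMap.sub_apply, ContinuousMap.mul_apply, hP', hQ']
        unfold brk at this
        rw [this]
        noncomm_ring
      · fun_prop
    · rw [hQ', h1, map_add, hseg, hb _ (unitInterval.symm t).2, volS_apply, volT_apply,
        unitInterval.coe_symm_eq, unitInterval.coe_symm_eq, hint]
      · congr 2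
        apply intervalIntegral.integral_congr
        intro τ hτ
        have hm := mem_unit_of_uIcc t.2 s.2 hτ
        have := hσb (P (unitInterval.symm t, unitInterval.symm (pI τ))) (Q (unitInterval.symm t, unitInterval.symm (pI τ)))
        simp only [hpIs τ hm, ContinuousMap.sub_apply, ContinuousMap.mul_apply, hP', hQ']
        unfold brk at this
        rw [this]
        noncomm_ring
      · fun_prop
  have e1 := cpq_eq (x := (starRingEnd ℂ w, starRingEnd ℂ z)) sol
  have e2 := cpq_eq (x := (z, w)) h
  have s0 : unitInterval.symm 0 = 1 := by simp
  have s1 : unitInterval.symm 1 = 0 := by simp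
  constructor
  · unfold cp cq
    rw [e1, e2]
    simp only [hP', s0, s1]
  · unfold cp cq
    rw [e1, e2]
    simp only [hQ', s0, s1]

end generic

section generic
variable {V : Type*} [NormedAddCommGroup V] [NormedSpace ℂ V] [CompleteSpace V]
open Filter Topology

lemma exists_local_ext {g : ℝ → V} {x0 : ℝ} (hg : AnalyticAt ℝ g x0) :
    ∃ r > 0, ∃ h : ℂ → V, DifferentiableOn ℂ h (Metric.ball (x0 : ℂ) r) ∧
      ∀ y : ℝ, (y : ℂ) ∈ Metric.ball (x0 : ℂ) r → h y = g y := by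
  obtain ⟨p, r, hp⟩ := hg
  obtain ⟨ρ, hρ0, hρ⟩ := ENNReal.lt_iff_exists_nnreal_btwn.1 hp.r_pos
  have hρp : (ρ : ENNReal) < p.radius := lt_of_lt_of_le hρ hp.r_le
  obtain ⟨C, hC0, hC⟩ := p.norm_mul_pow_le_of_lt_radius hρp
  let q : FormalMultilinearSeries ℂ ℂ V := fun n =>
    ContinuousMultilinearMap.mkPiRing ℂ (Fin n) (p.coeff n)
  have hq : ∀ n, ‖q n‖ = ‖p n‖ := by
    intro n
    simp only [q, ContinuousMultilinearMap.norm_mkPiRing, FormalMultilinearSeries.norm_apply_eq_norm_coef]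
  have hrad : (ρ : ENNReal) ≤ q.radius := by
    apply q.le_radius_of_bound C
    intro n
    rw [hq]; exact hC n
  have hqpos : 0 < q.radius := lt_of_lt_of_le (by exact_mod_cast hρ0) hrad
  have hqb := q.hasFPowerSeriesOnBall hqpos
  refine ⟨ρ, by exact_mod_cast hρ0, fun z => q.sum (z - x0), ?_, ?_⟩
  · have h1 : DifferentiableOn ℂ q.sum (Metric.eball 0 q.radius) := hqb.differentiableOn
    refine h1.comp (f := fun z : ℂ => z - x0) (by fun_prop) ?_
    intro z hz
    refine Metric.eball_subset_eball hrad ?_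
    rw [Metric.eball_coe, Metric.mem_ball, dist_zero_right]
    rwa [Metric.mem_ball, dist_eq_norm] at hz
  · intro y hy
    rw [Metric.mem_ball, dist_eq_norm] at hy
    have hs1 : HasSum (fun n => q n fun _ => ((y : ℂ) - x0)) (q.sum ((y:ℂ) - x0)) := by
      apply q.hasSum
      refine Metric.eball_subset_eball hrad ?_
      rw [Metric.eball_coe, Metric.mem_ball, dist_zero_right]
      exact hy
    have hs3 : HasSum (fun n => p n fun _ => (y - x0)) (g (x0 + (y - x0))) := by
      apply hp.hasSum
      refine Metric.eball_subset_eball hρ.le ?_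
      rw [Metric.eball_coe, Metric.mem_ball, dist_zero_right]
      rw [← Complex.ofReal_sub, Complex.norm_real] at hy
      exact hy
    rw [add_sub_cancel] at hs3
    refine hs1.unique ?_
    convert hs3 using 2 with n
    rw [FormalMultilinearSeries.apply_eq_pow_smul_coeff (p := p)]
    simp only [q, ContinuousMultilinearMap.mkPiRing_apply, Finset.prod_const, Finset.card_univ, Fintype.card_fin]
    rw [← Complex.ofReal_sub, ← Complex.ofReal_pow, Complex.coe_smul]

lemma re_mem_ball {x : ℝ} {z : ℂ} {r : ℝ} (h : z ∈ Metric.ball (x : ℂ) r) :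
    (z.re : ℂ) ∈ Metric.ball (x : ℂ) r := by
  rw [Metric.mem_ball, dist_eq_norm] at *
  refine lt_of_le_of_lt ?_ h
  rw [← Complex.ofReal_sub, Complex.norm_real]
  have := Complex.abs_re_le_norm (z - x)
  simpa using this

lemma freq_real (y : ℝ) {Pr : ℂ → Prop} (h : ∀ᶠ t : ℝ in 𝓝 y, Pr t) :
    ∃ᶠ z in 𝓝[≠] (y : ℂ), Pr z := by
  have hc : Tendsto (fun t : ℝ => (t : ℂ)) (𝓝[≠] y) (𝓝[≠] (y : ℂ)) := by
    apply tendsto_nhdsWithin_of_tendsto_nhds_of_eventually_within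
    · exact (Complex.continuous_ofReal.tendsto y).mono_left nhdsWithin_le_nhds
    · filter_upwards [self_mem_nhdsWithin] with t ht
      simpa using ht
  exact hc.frequently (h.filter_mono nhdsWithin_le_nhds).frequently

/-- identity theorem from the real axis -/
lemma eqOn_of_real {g h : ℂ → V} {U : Set ℂ} (hUo : IsOpen U) (hUc : Convex ℝ U)
    (hg : DifferentiableOn ℂ g U) (hh : DifferentiableOn ℂ h U) {y : ℝ} (hy : (y : ℂ) ∈ U)
    (heq : ∀ t : ℝ, (t : ℂ) ∈ U → g t = h t) : Set.EqOn g h U := by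
  refine (hg.analyticOnNhd hUo).eqOn_of_preconnected_of_frequently_eq (hh.analyticOnNhd hUo)
    hUc.isPreconnected hy ?_
  apply freq_real
  filter_upwards [(Complex.continuous_ofReal.tendsto y).eventually (hUo.mem_nhds hy)] with t ht
  exact heq t ht

theorem exists_complex_ext {J : Set ℝ} {g : ℝ → V} (hg : AnalyticOnNhd ℝ g J) :
    ∃ h : ℂ → V, (∀ x ∈ J, AnalyticAt ℂ h (x : ℂ)) ∧ ∀ x ∈ J, h x = g x := by
  have loc : ∀ x : J, ∃ r > 0, ∃ h : ℂ → V, DifferentiableOn ℂ h (Metric.ball ((x : ℝ) : ℂ) r) ∧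
      ∀ y : ℝ, (y : ℂ) ∈ Metric.ball ((x : ℝ) : ℂ) r → h y = g y := fun x => exists_local_ext (hg x x.2)
  choose r hr h hd he using loc
  classical
  let G : ℂ → V := fun z => if hz : ∃ x : J, z ∈ Metric.ball ((x : ℝ) : ℂ) (r x) then h hz.choose z else 0
  have hG : ∀ x : J, ∀ z ∈ Metric.ball ((x : ℝ) : ℂ) (r x), G z = h x z := by
    intro x z hz
    have hz' : ∃ x : J, z ∈ Metric.ball ((x : ℝ) : ℂ) (r x) := ⟨x, hz⟩
    have e : G z = h hz'.choose z := dif_pos hz'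
    have hc := hz'.choose_spec
    rw [e]
    set x' := hz'.choose
    refine eqOn_of_real (U := Metric.ball ((x' : ℝ) : ℂ) (r x') ∩ Metric.ball ((x : ℝ) : ℂ) (r x))
      (Metric.isOpen_ball.inter Metric.isOpen_ball)
      ((convex_ball _ _).inter (convex_ball _ _)) ((hd x').mono Set.inter_subset_left)
      ((hd x).mono Set.inter_subset_right) (y := z.re) ⟨re_mem_ball hc, re_mem_ball hz⟩ ?_ ⟨hc, hz⟩
    intro t ht
    rw [he _ _ ht.1, he _ _ ht.2]
  refine ⟨G, ?_, ?_⟩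
  · intro x hx
    have hb := Metric.isOpen_ball.mem_nhds (Metric.mem_ball_self (x := (x : ℂ)) (hr ⟨x, hx⟩))
    have : AnalyticAt ℂ (h ⟨x, hx⟩) (x : ℂ) := (hd ⟨x, hx⟩).analyticAt hb
    refine this.congr ?_
    filter_upwards [hb] with z hz
    exact (hG ⟨x, hx⟩ z hz).symm
  · intro x hx
    have hm := Metric.mem_ball_self (x := (x : ℂ)) (hr ⟨x, hx⟩)
    rw [hG ⟨x, hx⟩ _ hm, he ⟨x, hx⟩ x hm]

end generic

section generic
variable {V : Type*} [NormedRing V] [NormedAlgebra ℂ V] [CompleteSpace V]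
open Filter Topology

def lin (A B : V) : ℂ →L[ℝ] V :=
  (ContinuousLinearMap.toSpanSingleton ℂ A).restrictScalars ℝ +
    ((ContinuousLinearMap.toSpanSingleton ℂ B).restrictScalars ℝ).comp (Complex.conjCLE : ℂ →L[ℝ] ℂ)

lemma lin_apply (A B : V) (h : ℂ) : lin A B h = h • A + (starRingEnd ℂ h) • B := rfl

def slc (g : ℂ × ℂ → V) (ζ : ℂ) : V := g (ζ, starRingEnd ℂ ζ)

lemma slc_hasFDerivAt {g : ℂ × ℂ → V} {ζ : ℂ} (hg : AnalyticAt ℂ g (ζ, starRingEnd ℂ ζ)) {A B : V}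
    (hA : HasDerivAt (fun z => g (z, starRingEnd ℂ ζ)) A ζ)
    (hB : HasDerivAt (fun w => g (ζ, w)) B (starRingEnd ℂ ζ)) :
    HasFDerivAt (slc g) (lin A B) ζ := by
  have h1 := (hg.differentiableAt.hasFDerivAt).restrictScalars ℝ
  have h2 : HasFDerivAt (fun ζ : ℂ => (ζ, starRingEnd ℂ ζ))
      ((ContinuousLinearMap.id ℝ ℂ).prod (Complex.conjCLE : ℂ →L[ℝ] ℂ)) ζ :=
    (hasFDerivAt_id ζ).prodMk ((Complex.conjCLE : ℂ →L[ℝ] ℂ).hasFDerivAt)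
  have h3 := HasFDerivAt.comp (f := fun ζ : ℂ => (ζ, starRingEnd ℂ ζ)) ζ h1 h2
  have eA := (hasDerivAt_left (x := (ζ, starRingEnd ℂ ζ)) hg.differentiableAt).unique hA
  have eB := (hasDerivAt_right (x := (ζ, starRingEnd ℂ ζ)) hg.differentiableAt).unique hB
  refine h3.congr_fderiv ?_
  ext1 h
  rw [lin_apply, ← eA, ← eB, ← map_smul, ← map_smul, ← map_add]
  simp

lemma slc_contDiffAt {g : ℂ × ℂ → V} {ζ : ℂ} (hg : AnalyticAt ℂ g (ζ, starRingEnd ℂ ζ)) (n : WithTop ℕ∞):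
    ContDiffAt ℝ n (slc g) ζ := by
  have h1 : ContDiffAt ℝ n g (ζ, starRingEnd ℂ ζ) := hg.restrictScalars.contDiffAt
  have h2 : ContDiff ℝ n (fun ζ : ℂ => (ζ, starRingEnd ℂ ζ)) :=
    contDiff_id.prodMk ((Complex.conjCLE : ℂ →L[ℝ] ℂ).contDiff)
  exact ContDiffAt.comp (f := fun ζ : ℂ => (ζ, starRingEnd ℂ ζ)) ζ h1 h2.contDiffAt

section slice
def gpx (f : ℂ → V) (z : ℂ) : V := fderiv ℝ f z 1
def gpy (f : ℂ → V) (z : ℂ) : V := fderiv ℝ f z Complex.I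
variable {φ a b : ℂ → V} {c : ℂ}

lemma Pkg.hasF {ζ : ℂ} (h : Pkg φ a b c (ζ, starRingEnd ℂ ζ)) :
    HasFDerivAt (slc (cf φ a b c)) (lin (slc (cp a b c) ζ) (slc (cq a b c) ζ)) ζ :=
  slc_hasFDerivAt h.anf h.fz h.fw

lemma Pkg.px_eq {ζ : ℂ} (h : Pkg φ a b c (ζ, starRingEnd ℂ ζ)) :
    gpx (slc (cf φ a b c)) ζ = slc (cp a b c) ζ + slc (cq a b c) ζ := by
  unfold gpx
  rw [h.hasF.fderiv, lin_apply]; simp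

lemma Pkg.py_eq {ζ : ℂ} (h : Pkg φ a b c (ζ, starRingEnd ℂ ζ)) :
    gpy (slc (cf φ a b c)) ζ = Complex.I • (slc (cp a b c) ζ - slc (cq a b c) ζ) := by
  unfold gpy
  rw [h.hasF.fderiv, lin_apply]; simp [smul_sub, sub_eq_add_neg]

lemma Pkg.lap {ζ : ℂ} (h : ∀ᶠ ζ in 𝓝 ζ, Pkg φ a b c (ζ, starRingEnd ℂ ζ)) :
    gpx (gpx (slc (cf φ a b c))) ζ + gpy (gpy (slc (cf φ a b c))) ζ =
      (4 * c) • brk (slc (cp a b c) ζ) (slc (cq a b c) ζ) := by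
  have h0 := h.self_of_nhds
  have hx : gpx (slc (cf φ a b c)) =ᶠ[𝓝 ζ] (fun ζ => slc (cp a b c) ζ + slc (cq a b c) ζ) :=
    h.mono (fun _ h => h.px_eq)
  have hy : gpy (slc (cf φ a b c)) =ᶠ[𝓝 ζ] (fun ζ => Complex.I • (slc (cp a b c) ζ - slc (cq a b c) ζ)) :=
    h.mono (fun _ h => h.py_eq)
  have d1 := slc_hasFDerivAt h0.anp (hasDerivAt_left (x := (ζ, starRingEnd ℂ ζ)) h0.anp.differentiableAt) h0.pw
  have d2 := slc_hasFDerivAt h0.anq h0.qz (hasDerivAt_right (x := (ζ, starRingEnd ℂ ζ)) h0.anq.differentiableAt)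
  rw [gpx, gpy, hx.fderiv_eq, hy.fderiv_eq, (d1.fun_add d2).fderiv, ((d1.fun_sub d2).fun_const_smul Complex.I).fderiv]
  set A := fderiv ℂ (cp a b c) (ζ, starRingEnd ℂ ζ) (1, 0)
  set B := fderiv ℂ (cq a b c) (ζ, starRingEnd ℂ ζ) (0, 1)
  simp only [_root_.add_apply, _root_.smul_apply, _root_.sub_apply, lin_apply,
    map_one, one_smul, Complex.conj_I, slc]
  match_scalars <;> ring_nf <;> simp only [Complex.I_sq] <;> ring

end slice

end generic

section generic
variable {V : Type*} [NormedRing V] [NormedAlgebra ℂ V] [CompleteSpace V]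
open Filter Topology

lemma cstR {W : Type*} [NormedAddCommGroup W] [NormedSpace ℝ W] {x0 : ℂ} {r : ℝ} (g : ℂ → W)
      (hg : ∀ w ∈ Metric.ball x0 r, HasFDerivAt g (0 : ℂ →L[ℝ] W) w) :
      ∀ z ∈ Metric.ball x0 r, ∀ w ∈ Metric.ball x0 r, g z = g w := by
    intro z hz w hw
    exact Metric.isOpen_ball.is_const_of_fderiv_eq_zero (𝕜 := ℝ) (convex_ball x0 r).isPreconnected
      (fun w hw => (hg w hw).differentiableAt.differentiableWithinAt)
        (fun w hw => (hg w hw).fderiv) hz hw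

structure SliceOK (φ a b : ℂ → V) (c : ℂ) (σ : V →L[ℝ] V) (tr : V →L[ℂ] ℂ) (B : V →L[ℂ] V →L[ℂ] ℂ)
    (ζ : ℂ) : Prop where
  pkg : Pkg φ a b c (ζ, starRingEnd ℂ ζ)
  σp : σ (slc (cp a b c) ζ) = slc (cq a b c) ζ
  σq : σ (slc (cq a b c) ζ) = slc (cp a b c) ζ
  tp : tr (slc (cp a b c) ζ) = 0
  tq : tr (slc (cq a b c) ζ) = 0
  Bp : B (slc (cp a b c) ζ) (slc (cp a b c) ζ) = 0
  Bq : B (slc (cq a b c) ζ) (slc (cq a b c) ζ) = 0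
  σf : σ (slc (cf φ a b c) ζ) = slc (cf φ a b c) ζ
  tf : tr (slc (cf φ a b c) ζ) = 0

lemma slice_local {φ a b : ℂ → V} {c : ℂ} {x0 : ℝ} (hφ : AnalyticAt ℂ φ x0)
    (ha : AnalyticAt ℂ a x0) (hb : AnalyticAt ℂ b x0)
    (hab : ∀ᶠ z in 𝓝 (x0 : ℂ), HasDerivAt φ (a z + b z) z)
    (σ : V →L[ℝ] V) (hσb : ∀ X Y, σ (brk X Y) = brk (σ X) (σ Y))
    (hσ : ∀ (l : ℂ) X, σ (l • X) = (starRingEnd ℂ l) • σ X) (hc : starRingEnd ℂ c = -c)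
    (hσσ : ∀ X, σ (σ X) = X) (hba : ∀ z, b (starRingEnd ℂ z) = σ (a z))
    (tr : V →L[ℂ] ℂ) (htr : ∀ X Y, tr (brk X Y) = 0) (htσ : ∀ X, tr X = 0 → tr (σ X) = 0)
    (B : V →L[ℂ] V →L[ℂ] ℂ) (hB : ∀ X Y, B X (brk X Y) = 0) (hB' : ∀ X Y, B (brk X Y) X = 0)
    (hBσ : ∀ X, B X X = 0 → B (σ X) (σ X) = 0)
    (hta : ∀ᶠ z in 𝓝 (x0 : ℂ), tr (a z) = 0) (hBa : ∀ᶠ z in 𝓝 (x0 : ℂ), B (a z) (a z) = 0)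
    (hσφ : σ (φ x0) = φ x0) (htφ : tr (φ x0) = 0) :
    ∃ r > 0, ∀ ζ ∈ Metric.ball (x0 : ℂ) r, SliceOK φ a b c σ tr B ζ := by
  obtain ⟨r1, hr1, H1⟩ := eventually_pkg c hφ ha hb hab
  obtain ⟨r2, hr2, H2⟩ := Metric.eventually_nhds_iff_ball.1 (hta.and hBa)
  have hab' : ∀ z, a (starRingEnd ℂ z) = σ (b z) := by
    intro z
    have := hba (starRingEnd ℂ z)
    rw [Complex.conj_conj] at this
    rw [this, hσσ]
  let r := min r1 r2
  have hmem : ∀ z w : ℂ, z ∈ Metric.ball (x0 : ℂ) r → w ∈ Metric.ball (x0 : ℂ) r →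
      Pkg φ a b c (z, w) := by
    intro z w hz hw
    apply H1
    rw [← ball_prod_same]
    exact ⟨Metric.ball_subset_ball (min_le_left _ _) hz, Metric.ball_subset_ball (min_le_left _ _) hw⟩
  have hconj : ∀ z : ℂ, z ∈ Metric.ball (x0 : ℂ) r → starRingEnd ℂ z ∈ Metric.ball (x0 : ℂ) r := by
    intro z hz
    rw [Metric.mem_ball, dist_eq_norm] at *
    rwa [← Complex.norm_conj, map_sub, Complex.conj_conj, Complex.conj_ofReal]
  have hcst : ∀ g : ℂ → ℂ, (∀ w ∈ Metric.ball (x0 : ℂ) r, HasDerivAt g 0 w) →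
      ∀ z ∈ Metric.ball (x0 : ℂ) r, ∀ w ∈ Metric.ball (x0 : ℂ) r, g z = g w := by
    intro g hg z hz w hw
    exact Metric.isOpen_ball.is_const_of_deriv_eq_zero (𝕜 := ℂ) (convex_ball (x0 : ℂ) r).isPreconnected
      (fun w hw => (hg w hw).differentiableAt.differentiableWithinAt)
        (fun w hw => (hg w hw).deriv) hz hw
  have hsym : ∀ ζ ∈ Metric.ball (x0 : ℂ) r,
      σ (slc (cp a b c) ζ) = slc (cq a b c) ζ ∧ σ (slc (cq a b c) ζ) = slc (cp a b c) ζ := by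
    intro ζ hζ
    obtain ⟨P, Q, hs⟩ := (hmem ζ _ hζ (hconj ζ hζ)).sol
    have := hs.conj σ hσb hσ hc (fun s _ => hba _) (fun s _ => hab' _)
    simp only [Complex.conj_conj] at this
    exact ⟨this.2.symm, this.1.symm⟩
  have htp : ∀ ζ ∈ Metric.ball (x0 : ℂ) r, tr (slc (cp a b c) ζ) = 0 := by
    intro ζ hζ
    have := hcst (fun w => tr (cp a b c (ζ, w))) (fun w hw => by
      have h := (tr.hasFDerivAt).comp_hasDerivAt w (hmem ζ w hζ hw).pw
      rw [map_smul, htr, smul_zero] at h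
      exact h) _ (hconj ζ hζ) ζ hζ
    rw [slc, this, (cp_diag a b c ζ (hmem ζ ζ hζ hζ).sol).1]
    exact (H2 ζ (Metric.ball_subset_ball (min_le_right _ _) hζ)).1
  have hBp : ∀ ζ ∈ Metric.ball (x0 : ℂ) r, B (slc (cp a b c) ζ) (slc (cp a b c) ζ) = 0 := by
    intro ζ hζ
    have := hcst (fun w => B (cp a b c (ζ, w)) (cp a b c (ζ, w))) (fun w hw => by
      have h0 := (hmem ζ w hζ hw).pw
      have h1 := (B.hasFDerivAt).comp_hasDerivAt w h0
      have h := h1.clm_apply h0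
      simp only [map_smul, Function.comp, hB, _root_.smul_apply, hB', smul_zero, add_zero] at h
      exact h) _ (hconj ζ hζ) ζ hζ
    rw [slc, this, (cp_diag a b c ζ (hmem ζ ζ hζ hζ).sol).1]
    exact (H2 ζ (Metric.ball_subset_ball (min_le_right _ _) hζ)).2
  have htq : ∀ ζ ∈ Metric.ball (x0 : ℂ) r, tr (slc (cq a b c) ζ) = 0 := by
    intro ζ hζ
    rw [← (hsym ζ hζ).1]; exact htσ _ (htp ζ hζ)
  have hr : 0 < r := lt_min hr1 hr2
  have hx0 : (x0 : ℂ) ∈ Metric.ball (x0 : ℂ) r := Metric.mem_ball_self hr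
  have hf0 : slc (cf φ a b c) x0 = φ x0 := by
    rw [slc, Complex.conj_ofReal, cf_diag]
  refine ⟨r, hr, fun ζ hζ => ⟨hmem ζ _ hζ (hconj ζ hζ), (hsym ζ hζ).1, (hsym ζ hζ).2, htp ζ hζ,
    htq ζ hζ, hBp ζ hζ, ?_, ?_, ?_⟩⟩
  · rw [← (hsym ζ hζ).1]; exact hBσ _ (hBp ζ hζ)
  · have := cstR (fun ζ => σ (slc (cf φ a b c) ζ) - slc (cf φ a b c) ζ) (fun w hw => by
      have h1 := (hmem w _ hw (hconj w hw)).hasF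
      have h2 := (σ.hasFDerivAt.comp w h1).fun_sub h1
      refine h2.congr_fderiv ?_
      ext1 h
      simp [lin_apply, hσ, (hsym w hw).1, (hsym w hw).2]
      abel) ζ hζ x0 hx0
    simp only [hf0, hσφ, sub_self] at this
    exact sub_eq_zero.1 this
  · have := cstR (fun ζ => tr (slc (cf φ a b c) ζ)) (fun w hw => by
      have h1 := (hmem w _ hw (hconj w hw)).hasF
      have h2 := ((tr.restrictScalars ℝ).hasFDerivAt.comp w h1)
      refine h2.congr_fderiv ?_
      ext1 h
      simp [lin_apply, htp w hw, htq w hw]) ζ hζ x0 hx0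
    simp only [hf0, htφ] at this
    exact this

end generic

section generic
variable {V : Type*} [NormedRing V] [NormedAlgebra ℂ V] [CompleteSpace V]
open Filter Topology

lemma conj_analytic {a : ℂ → V} {x0 : ℝ} (ha : AnalyticAt ℂ a x0) (σ : V →L[ℝ] V)
    (hσ : ∀ (l : ℂ) X, σ (l • X) = (starRingEnd ℂ l) • σ X) :
    AnalyticAt ℂ (fun z => σ (a (starRingEnd ℂ z))) x0 := by
  rw [Complex.analyticAt_iff_eventually_differentiableAt] at ha ⊢
  have hc : Tendsto (starRingEnd ℂ) (𝓝 (x0 : ℂ)) (𝓝 (x0 : ℂ)) := by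
    have := (Complex.continuous_conj).tendsto (x0 : ℂ)
    rwa [Complex.conj_ofReal] at this
  filter_upwards [hc.eventually ha] with z hz
  have h1 := hz.hasDerivAt.hasFDerivAt.restrictScalars ℝ
  have h2 : HasFDerivAt (fun z : ℂ => starRingEnd ℂ z) (Complex.conjCLE : ℂ →L[ℝ] ℂ) z :=
    (Complex.conjCLE : ℂ →L[ℝ] ℂ).hasFDerivAt
  have h3 := σ.hasFDerivAt.comp z (HasFDerivAt.comp (f := fun z : ℂ => starRingEnd ℂ z) z h1 h2)
  have h4 := hasFDerivAt_of_restrictScalars (𝕜 := ℝ) (𝕜' := ℂ)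
    (f' := ContinuousLinearMap.toSpanSingleton ℂ (σ (deriv a (starRingEnd ℂ z)))) h3 (by
      ext1 h
      simp [hσ])
  exact h4.differentiableAt

lemma eventually_of_real {W : Type*} [NormedAddCommGroup W] [NormedSpace ℂ W] {g h : ℂ → W} {x0 : ℝ}
    (hg : AnalyticAt ℂ g x0) (hh : AnalyticAt ℂ h x0)
    (he : ∀ᶠ t : ℝ in 𝓝 x0, g t = h t) : ∀ᶠ z in 𝓝 (x0 : ℂ), g z = h z :=
  (hg.frequently_eq_iff_eventually_eq hh).1 (freq_real x0 he)

structure GenOut (f : ℂ → V) (H : ℝ) (σ : V →L[ℝ] V) (tr : V →L[ℂ] ℂ) (B : V →L[ℂ] V →L[ℂ] ℂ)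
    (z : ℂ) : Prop where
  cf : ∀ n : WithTop ℕ∞, ContDiffAt ℝ n f z
  cx : ∀ n : WithTop ℕ∞, ContDiffAt ℝ n (gpx f) z
  cy : ∀ n : WithTop ℕ∞, ContDiffAt ℝ n (gpy f) z
  σf : σ (f z) = f z
  tf : tr (f z) = 0
  σx : σ (gpx f z) = gpx f z
  tx : tr (gpx f z) = 0
  σy : σ (gpy f z) = gpy f z
  ty : tr (gpy f z) = 0
  Beq : B (gpx f z) (gpx f z) = B (gpy f z) (gpy f z)
  Bxy : B (gpx f z) (gpy f z) = 0
  lap : gpx (gpx f) z + gpy (gpy f) z = (H : ℂ) • brk (gpx f z) (gpy f z)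

theorem generic_bjorling {J : Set ℝ} (hJ : IsOpen J) {f₀ g : ℝ → V}
    (hf₀ : AnalyticOnNhd ℝ f₀ J) (hg : AnalyticOnNhd ℝ g J) (H : ℝ)
    (σ : V →L[ℝ] V) (hσb : ∀ X Y, σ (brk X Y) = brk (σ X) (σ Y))
    (hσ : ∀ (l : ℂ) X, σ (l • X) = (starRingEnd ℂ l) • σ X)
    (hσσ : ∀ X, σ (σ X) = X)
    (tr : V →L[ℂ] ℂ) (htr : ∀ X Y, tr (brk X Y) = 0) (htσ : ∀ X, tr X = 0 → tr (σ X) = 0)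
    (B : V →L[ℂ] V →L[ℂ] ℂ) (hB : ∀ X Y, B X (brk X Y) = 0) (hB' : ∀ X Y, B (brk X Y) X = 0)
    (hBs : ∀ X Y, B X Y = B Y X)
    (hBσ : ∀ X, B X X = 0 → B (σ X) (σ X) = 0)
    (hσf : ∀ x ∈ J, σ (f₀ x) = f₀ x) (htf : ∀ x ∈ J, tr (f₀ x) = 0)
    (hσg : ∀ x ∈ J, σ (g x) = g x) (htg : ∀ x ∈ J, tr (g x) = 0)
    (hBB : ∀ x ∈ J, B (deriv f₀ x) (deriv f₀ x) = B (g x) (g x))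
    (hB0 : ∀ x ∈ J, B (deriv f₀ x) (g x) = 0) :
    ∃ S : Set ℂ, IsOpen S ∧ (∀ x ∈ J, (x : ℂ) ∈ S) ∧ ∃ f : ℂ → V,
      (∀ z ∈ S, GenOut f H σ tr B z) ∧
      (∀ x ∈ J, f x = f₀ x ∧ gpx f x = deriv f₀ x ∧ gpy f x = g x) := by
  have h22 : (starRingEnd ℂ) 2 = 2 := map_ofNat _ 2
  have hd : AnalyticOnNhd ℝ (deriv f₀) J := hf₀.deriv
  have hder : ∀ x ∈ J, HasDerivAt f₀ (deriv f₀ x) x := fun x hx => (hf₀ x hx).differentiableAt.hasDerivAt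
  have hJn : ∀ x ∈ J, ∀ᶠ t in 𝓝 x, t ∈ J := fun x hx => hJ.mem_nhds hx
  have hσd : ∀ x ∈ J, σ (deriv f₀ x) = deriv f₀ x := by
    intro x hx
    have h1 := σ.hasFDerivAt.comp_hasDerivAt x (hder x hx)
    refine h1.unique ((hder x hx).congr_of_eventuallyEq ?_)
    filter_upwards [hJn x hx] with t ht
    exact hσf t ht
  have htd : ∀ x ∈ J, tr (deriv f₀ x) = 0 := by
    intro x hx
    have h1 := (tr.restrictScalars ℝ).hasFDerivAt.comp_hasDerivAt x (hder x hx)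
    refine h1.unique ((hasDerivAt_const x (0 : ℂ)).congr_of_eventuallyEq ?_)
    filter_upwards [hJn x hx] with t ht
    exact htf t ht
  let a0 : ℝ → V := fun x => (2⁻¹ : ℂ) • (deriv f₀ x - Complex.I • g x)
  have ha0 : AnalyticOnNhd ℝ a0 J := fun x hx =>
    ((hd x hx).sub ((hg x hx).const_smul (c := Complex.I))).const_smul (c := (2⁻¹ : ℂ))
  obtain ⟨a, haA, haE⟩ := exists_complex_ext ha0
  obtain ⟨φ, hφA, hφE⟩ := exists_complex_ext hf₀
  let b : ℂ → V := fun z => σ (a (starRingEnd ℂ z))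
  have hbA : ∀ x ∈ J, AnalyticAt ℂ b x := fun x hx => conj_analytic (haA x hx) σ hσ
  have hbE : ∀ x ∈ J, b x = (2⁻¹ : ℂ) • (deriv f₀ x + Complex.I • g x) := by
    intro x hx
    simp only [b, Complex.conj_ofReal, haE x hx, a0, hσ, map_sub, hσd x hx, hσg x hx]
    simp [h22]
  let c : ℂ := -(Complex.I * H / 2)
  have hc : starRingEnd ℂ c = -c := by simp [c, neg_div, h22]
  have habsum : ∀ x ∈ J, a x + b x = deriv f₀ x := by
    intro x hx
    rw [haE x hx, hbE x hx]
    simp only [a0]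
    module
  have loc : ∀ x ∈ J, ∃ r > 0, ∀ ζ ∈ Metric.ball (x : ℂ) r, SliceOK φ a b c σ tr B ζ := by
    intro x hx
    have hφx := hφA x hx
    have hax := haA x hx
    refine slice_local hφx hax (hbA x hx) ?_ σ hσb hσ hc hσσ (fun z => by simp [b]) tr htr htσ B
      hB hB' hBσ ?_ ?_ ?_ ?_
    · have h1 : ∀ᶠ z in 𝓝 (x : ℂ), deriv φ z = a z + b z := by
        refine eventually_of_real hφx.deriv (hax.add (hbA x hx)) ?_
        filter_upwards [hJn x hx] with t ht
        rw [habsum t ht]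
        have h2 := HasDerivAt.scomp (𝕜 := ℝ) (h := fun s : ℝ => (s : ℂ)) t (hφA t ht).differentiableAt.hasDerivAt
          (Complex.ofRealCLM.hasDerivAt (x := t))
        rw [Complex.ofRealCLM_apply, Complex.ofReal_one, one_smul] at h2
        refine h2.unique ((hder t ht).congr_of_eventuallyEq ?_)
        filter_upwards [hJn t ht] with s hs using hφE s hs
      filter_upwards [h1, hφx.eventually_analyticAt] with z hz hz2
      rw [← hz]; exact hz2.differentiableAt.hasDerivAt
    · refine eventually_of_real (h := fun _ => 0) ((tr.analyticAt _).comp hax) analyticAt_const ?_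
      filter_upwards [hJn x hx] with t ht
      simp [haE t ht, a0, htd t ht, htg t ht]
    · refine eventually_of_real (g := fun z => B (a z) (a z)) (h := fun _ => 0) ?_ analyticAt_const ?_
      · exact (B.analyticAt_bilinear (a x, a x)).comp₂ hax hax
      · filter_upwards [hJn x hx] with t ht
        have := hB0 t ht
        have h2 := hBs (g t) (deriv f₀ t)
        simp only [haE t ht, a0, map_smul, map_sub, _root_.smul_apply, _root_.sub_apply, h2, this,
          hBB t ht, smul_eq_mul]
        ring_nf; simp
    · rw [hφE x hx, hσf x hx]
    · rw [hφE x hx, htf x hx]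
  choose! r hr hloc using loc
  let S : Set ℂ := ⋃ x ∈ J, Metric.ball (x : ℂ) (r x)
  have hS : ∀ z ∈ S, SliceOK φ a b c σ tr B z := by
    intro z hz
    simp only [S, Set.mem_iUnion] at hz
    obtain ⟨x, hx, hz⟩ := hz
    exact hloc x hx z hz
  have hSo : IsOpen S := isOpen_biUnion fun _ _ => Metric.isOpen_ball
  have hJS : ∀ x ∈ J, (x : ℂ) ∈ S := fun x hx => by
    simp only [S, Set.mem_iUnion]
    exact ⟨x, hx, Metric.mem_ball_self (hr x hx)⟩
  refine ⟨S, hSo, hJS, slc (cf φ a b c), ?_, ?_⟩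
  · intro z hz
    have h := hS z hz
    have hev : ∀ᶠ ζ in 𝓝 z, Pkg φ a b c (ζ, starRingEnd ℂ ζ) := by
      filter_upwards [hSo.mem_nhds hz] with ζ hζ using (hS ζ hζ).pkg
    have hx : gpx (slc (cf φ a b c)) =ᶠ[𝓝 z] (fun ζ => slc (cp a b c) ζ + slc (cq a b c) ζ) :=
      hev.mono (fun _ h => h.px_eq)
    have hy : gpy (slc (cf φ a b c)) =ᶠ[𝓝 z] (fun ζ => Complex.I • (slc (cp a b c) ζ - slc (cq a b c) ζ)) :=
      hev.mono (fun _ h => h.py_eq)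
    have hpq := hBs (slc (cq a b c) z) (slc (cp a b c) z)
    refine ⟨fun n => slc_contDiffAt h.pkg.anf n, ?_, ?_, h.σf, h.tf, ?_, ?_, ?_, ?_, ?_, ?_, ?_⟩
    · exact fun n => ((slc_contDiffAt h.pkg.anp n).add (slc_contDiffAt h.pkg.anq n)).congr_of_eventuallyEq hx
    · exact fun n => (((slc_contDiffAt h.pkg.anp n).sub (slc_contDiffAt h.pkg.anq n)).const_smul
        Complex.I).congr_of_eventuallyEq hy
    · rw [h.pkg.px_eq, map_add, h.σp, h.σq, add_comm]
    · rw [h.pkg.px_eq, map_add, h.tp, h.tq, add_zero]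
    · rw [h.pkg.py_eq, hσ, map_sub, h.σp, h.σq, Complex.conj_I]; module
    · rw [h.pkg.py_eq, map_smul, map_sub, h.tp, h.tq]; simp
    · rw [h.pkg.px_eq, h.pkg.py_eq]
      simp only [map_smul, map_sub, map_add, _root_.smul_apply, _root_.sub_apply, _root_.add_apply,
        h.Bp, h.Bq, hpq, smul_eq_mul]
      ring_nf; simp
    · rw [h.pkg.px_eq, h.pkg.py_eq]
      simp only [map_smul, map_sub, map_add, _root_.smul_apply, _root_.sub_apply, _root_.add_apply,
        h.Bp, h.Bq, hpq, smul_eq_mul]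
      ring_nf
    · rw [Pkg.lap hev, h.pkg.px_eq, h.pkg.py_eq]
      generalize slc (cp a b c) z = p
      generalize slc (cq a b c) z = q
      simp only [brk, smul_mul_assoc, mul_smul_comm, c, mul_add, mul_sub, add_mul, sub_mul]
      module
  · intro x hx
    have h := hS x (hJS x hx)
    have hp := h.pkg
    rw [Complex.conj_ofReal] at hp
    have hd := cp_diag a b c x hp.sol
    rw [h.pkg.px_eq, h.pkg.py_eq]
    simp only [slc, Complex.conj_ofReal, cf_diag, hd.1, hd.2]
    refine ⟨hφE x hx, habsum x hx, ?_⟩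
    rw [haE x hx, hbE x hx]
    simp only [a0]
    match_scalars
    · ring
    · ring_nf; simp
end generic

section quat
open Filter Topology

abbrev QH : Type := Quaternion ℝ
def qi : QH := ⟨0, 1, 0, 0⟩
def qj : QH := ⟨0, 0, 1, 0⟩
def qk : QH := ⟨0, 0, 0, 1⟩

@[simp] lemma qi_re : qi.re = 0 := rfl
@[simp] lemma qi_imI : qi.imI = 1 := rfl
@[simp] lemma qi_imJ : qi.imJ = 0 := rfl
@[simp] lemma qi_imK : qi.imK = 0 := rfl
@[simp] lemma qj_re : qj.re = 0 := rfl
@[simp] lemma qj_imI : qj.imI = 0 := rfl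
@[simp] lemma qj_imJ : qj.imJ = 1 := rfl
@[simp] lemma qj_imK : qj.imK = 0 := rfl
@[simp] lemma qk_re : qk.re = 0 := rfl
@[simp] lemma qk_imI : qk.imI = 0 := rfl
@[simp] lemma qk_imJ : qk.imJ = 0 := rfl
@[simp] lemma qk_imK : qk.imK = 1 := rfl
@[simp] lemma qone_re : (1 : QH).re = 1 := rfl
@[simp] lemma qone_imI : (1 : QH).imI = 0 := rfl
@[simp] lemma qone_imJ : (1 : QH).imJ = 0 := rfl
@[simp] lemma qone_imK : (1 : QH).imK = 0 := rfl

lemma qii : qi * qi = -1 := by apply Quaternion.ext <;> simp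
lemma qjj : qj * qj = -1 := by apply Quaternion.ext <;> simp
lemma qkk : qk * qk = -1 := by apply Quaternion.ext <;> simp
lemma qij : qi * qj = qk := by apply Quaternion.ext <;> simp
lemma qji : qj * qi = -qk := by apply Quaternion.ext <;> simp
lemma qjk : qj * qk = qi := by apply Quaternion.ext <;> simp
lemma qkj : qk * qj = -qi := by apply Quaternion.ext <;> simp
lemma qki : qk * qi = qj := by apply Quaternion.ext <;> simp
lemma qik : qi * qk = -qj := by apply Quaternion.ext <;> simp

def InL (x y q : QH) : Prop := x * q = q * qi ∧ y * q = q * qj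

def Prj (x y G : QH) : QH := G - x * G * qi - y * G * qj - x * y * G * qk

structure ON (x y : QH) : Prop where
  xx : x * x = -1
  yy : y * y = -1
  xy : y * x = -(x * y)

lemma ON.inL {x y : QH} (h : ON x y) (G : QH) : InL x y (Prj x y G) := by
  have a1 : x * (x * y) = -y := by rw [← mul_assoc, h.xx]; simp
  have a2 : y * (x * y) = x := by rw [← mul_assoc, h.xy, neg_mul, mul_assoc, h.yy]; simp
  constructor
  · have e1 : x * (x * G * qi) = -(G * qi) := by rw [← mul_assoc, ← mul_assoc, h.xx]; simp
    have e2 : x * (y * G * qj) = x * y * G * qj := by simp only [mul_assoc]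
    have e3 : x * (x * y * G * qk) = -(y * G * qk) := by rw [← mul_assoc, ← mul_assoc, a1]; simp
    have f1 : x * G * qi * qi = -(x * G) := by rw [mul_assoc, qii]; simp
    have f2 : y * G * qj * qi = -(y * G * qk) := by rw [mul_assoc, qji]; simp
    have f3 : x * y * G * qk * qi = x * y * G * qj := by rw [mul_assoc, qki]
    simp only [Prj, mul_sub, sub_mul, e1, e2, e3, f1, f2, f3]; abel
  · have e1 : y * (x * G * qi) = -(x * y * G * qi) := by rw [← mul_assoc, ← mul_assoc, h.xy]; simp
    have e2 : y * (y * G * qj) = -(G * qj) := by rw [← mul_assoc, ← mul_assoc, h.yy]; simp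
    have e3 : y * (x * y * G * qk) = x * G * qk := by rw [← mul_assoc, ← mul_assoc, a2]
    have f1 : x * G * qi * qj = x * G * qk := by rw [mul_assoc, qij]
    have f2 : y * G * qj * qj = -(y * G) := by rw [mul_assoc, qjj]; simp
    have f3 : x * y * G * qk * qj = -(x * y * G * qi) := by rw [mul_assoc, qkj]; simp
    simp only [Prj, mul_sub, sub_mul, e1, e2, e3, f1, f2, f3]; abel

lemma InL.prj {x y L : QH} (h : InL x y L) (G : QH) : Prj x y (L * G) = L * ((4 * G.re : ℝ) : QH) := by
  have e1 : x * (L * G) * qi = L * (qi * G * qi) := by rw [← mul_assoc, h.1]; simp only [mul_assoc]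
  have e2 : y * (L * G) * qj = L * (qj * G * qj) := by rw [← mul_assoc, h.2]; simp only [mul_assoc]
  have e3 : x * y * (L * G) * qk = L * (qk * G * qk) := by
    rw [← qij]
    have : x * y * (L * G) = x * (y * L) * G := by simp only [mul_assoc]
    rw [this, h.2, ← mul_assoc x, h.1]; simp only [mul_assoc]
  rw [Prj, e1, e2, e3, ← mul_sub, ← mul_sub, ← mul_sub]
  congr 1
  apply Quaternion.ext <;> simp <;> ring

lemma exists_prj_ne (x y : QH) : ∃ G, Prj x y G ≠ 0 := by
  by_contra! h
  have h1 := h 1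
  have h2 := h qi
  have h3 := h qj
  have h4 := h qk
  have : Prj x y 1 - Prj x y qi * qi - Prj x y qj * qj - Prj x y qk * qk = ((4 : ℝ) : QH) := by
    simp only [Prj]
    generalize x * y = w
    apply Quaternion.ext <;> simp <;> ring
  rw [h1, h2, h3, h4] at this
  have := congrArg QuaternionAlgebra.re this
  simp only [zero_mul, sub_zero, Quaternion.re_coe] at this
  change (0 : ℝ) = 4 at this
  norm_num at this

lemma InL.smul {x y L : QH} (h : InL x y L) (r : ℝ) : InL x y (r • L) := by
  constructor
  · rw [mul_smul_comm, h.1, smul_mul_assoc]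
  · rw [mul_smul_comm, h.2, smul_mul_assoc]

lemma InL.prj_self {x y L : QH} (h : InL x y L) : Prj x y L = (4 : ℝ) • L := by
  have := h.prj 1
  rw [mul_one] at this
  rw [this, qone_re, mul_one, ← Quaternion.coe_mul_eq_smul]
  exact (Quaternion.coe_commutes 4 L).symm

lemma InL.eq_or {x y L M : QH} (h : InL x y L) (h' : InL x y M) (hL : ‖L‖ = 1) (hM : ‖M‖ = 1) :
    M = L ∨ M = -L := by
  have hL0 : L ≠ 0 := by rintro rfl; simp at hL
  have a := h.prj (L⁻¹ * M)
  rw [mul_inv_cancel_left₀ hL0, h'.prj_self, Quaternion.coe_mul, ← mul_assoc, ← Quaternion.coe_commutes 4 L, mul_assoc,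
    Quaternion.coe_mul_eq_smul] at a
  have hr : M = L * (((L⁻¹ * M).re : ℝ) : QH) := smul_right_injective QH (four_ne_zero (α := ℝ)) a
  have hn : |(L⁻¹ * M).re| = 1 := by
    have := congrArg norm hr
    rw [norm_mul, hL, hM, one_mul, Quaternion.norm_coe, Real.norm_eq_abs] at this
    exact this.symm
  rcases (abs_eq (zero_le_one)).1 hn with h | h
  · left; rw [hr, h]; simp
  · right; rw [hr, h]; simp

def nrm (q : QH) : QH := ‖q‖⁻¹ • q

lemma norm_nrm {q : QH} (h : q ≠ 0) : ‖nrm q‖ = 1 := by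
  rw [nrm, norm_smul, norm_inv, norm_norm, inv_mul_cancel₀ (norm_ne_zero_iff.2 h)]

lemma ON.exists_unit {x y : QH} (h : ON x y) : ∃ L : QH, ‖L‖ = 1 ∧ InL x y L := by
  obtain ⟨G, hG⟩ := exists_prj_ne x y
  exact ⟨nrm (Prj x y G), norm_nrm hG, (h.inL G).smul _⟩

lemma continuous_prj {A : Type*} [TopologicalSpace A] {x y G : A → QH} (hx : Continuous x) (hy : Continuous y)
    (hG : Continuous G) : Continuous (fun t => Prj (x t) (y t) (G t)) := by
  unfold Prj; fun_prop


section pmsec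
variable {K : Type*} [NormedDivisionRing K]

variable (K) in
def pm : Subgroup (Metric.sphere (0 : K) 1) where
  carrier := {1, -1}
  one_mem' := by simp
  mul_mem' := by
    rintro a b (rfl | rfl) (rfl | rfl) <;> simp
  inv_mem' := by
    rintro a (rfl | rfl)
    · simp
    · right
      apply inv_eq_of_mul_eq_one_right; simp

lemma pm_eq {a b : Metric.sphere (0 : K) 1} :
    (QuotientGroup.mk a : Metric.sphere (0 : K) 1 ⧸ pm K) = QuotientGroup.mk b ↔ b = a ∨ b = -a := by
  rw [QuotientGroup.eq]
  change (a⁻¹ * b = 1 ∨ a⁻¹ * b = -1) ↔ _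
  rw [inv_mul_eq_iff_eq_mul, inv_mul_eq_iff_eq_mul]; simp

variable (K) in
lemma pm_cov : IsCoveringMap (QuotientGroup.mk (s := pm K)) := by
  apply (Subgroup.isQuotientCoveringMap (pm K) ?_).isCoveringMap
  have : (pm K : Set (Metric.sphere (0 : K) 1)).Finite := by
    change ({1, -1} : Set _).Finite
    exact Set.toFinite _
  exact this.isDiscrete

lemma generic_lift {A : Type*} [TopologicalSpace A] [SimplyConnectedSpace A] [LocallyPathConnectedSpace A]
    (L : A → K) (hLn : ∀ t, ‖L t‖ = 1)
    (h : ∀ t0, ∃ M : A → K, ContinuousAt M t0 ∧ (∀ᶠ t in 𝓝 t0, ‖M t‖ = 1 ∧ (L t = M t ∨ L t = -M t))) :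
    ∃ F : A → K, Continuous F ∧ ∀ t, F t = L t ∨ F t = -L t := by
  let L' : A → Metric.sphere (0 : K) 1 := fun t => ⟨L t, by simpa using hLn t⟩
  have hc : Continuous (fun t => (QuotientGroup.mk (L' t) : Metric.sphere (0 : K) 1 ⧸ pm K)) := by
    rw [continuous_iff_continuousAt]
    intro t0
    obtain ⟨M, hMc, hM⟩ := h t0
    classical
    let M' : A → Metric.sphere (0 : K) 1 := fun t => if ht : ‖M t‖ = 1 then ⟨M t, by simpa using ht⟩ else 1
    have hM' : ContinuousAt M' t0 := by
      rw [Topology.IsInducing.subtypeVal.continuousAt_iff]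
      refine hMc.congr ?_
      filter_upwards [hM] with t ht
      simp [M', ht.1]
    have : ContinuousAt (fun t => (QuotientGroup.mk (M' t) : Metric.sphere (0 : K) 1 ⧸ pm K)) t0 :=
      (QuotientGroup.continuous_mk.continuousAt).comp hM'
    refine this.congr ?_
    filter_upwards [hM] with t ht
    rw [pm_eq]
    have h1 : M' t = ⟨M t, by simpa using ht.1⟩ := by simp [M', ht.1]
    rw [h1]
    rcases ht.2 with h | h
    · left; exact Subtype.ext h
    · right; exact Subtype.ext h
  obtain ⟨a0⟩ : Nonempty A := inferInstance
  obtain ⟨F, ⟨-, hF⟩, -⟩ := (pm_cov K).existsUnique_continuousMap_lifts ⟨_, hc⟩ a0 (L' a0) rfl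
  refine ⟨fun t => F t, continuous_subtype_val.comp F.continuous, fun t => ?_⟩
  have := congrFun hF t
  simp only [Function.comp, ContinuousMap.coe_mk, pm_eq] at this
  rcases this with h | h
  · left; exact (congrArg Subtype.val h).symm
  · right; have h2 : F t = -L' t := by rw [h, neg_neg]
    exact congrArg Subtype.val h2
end pmsec

lemma exists_lift {A : Type*} [TopologicalSpace A] [SimplyConnectedSpace A] [LocallyPathConnectedSpace A]
    {x y : A → QH} (hx : Continuous x) (hy : Continuous y) (h : ∀ t, ON (x t) (y t)) :
    ∃ F : A → QH, Continuous F ∧ ∀ t, ‖F t‖ = 1 ∧ InL (x t) (y t) (F t) := by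
  choose L hLn hL using fun t => (h t).exists_unit
  obtain ⟨F, hFc, hF⟩ := generic_lift L hLn (by
    intro t0
    let P : A → QH := fun t => Prj (x t) (y t) (L t0)
    have hPc : Continuous P := continuous_prj hx hy continuous_const
    have hP0 : P t0 ≠ 0 := by
      simp only [P, (hL t0).prj_self]
      rw [← norm_ne_zero_iff, norm_smul, hLn]; norm_num
    have hev : ∀ᶠ t in 𝓝 t0, P t ≠ 0 := hPc.continuousAt.eventually_ne hP0
    refine ⟨fun t => nrm (P t), ?_, ?_⟩
    · unfold nrm
      exact (hPc.continuousAt.norm.inv₀ (norm_ne_zero_iff.2 hP0)).smul hPc.continuousAt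
    · filter_upwards [hev] with t ht
      exact ⟨norm_nrm ht, (((h t).inL _).smul _).eq_or (hL t) (norm_nrm ht) (hLn t)⟩)
  refine ⟨F, hFc, fun t => ?_⟩
  rcases hF t with h | h
  · rw [h]; exact ⟨hLn t, hL t⟩
  · rw [h]; exact ⟨by rw [norm_neg, hLn t], by simpa using (hL t).smul (-1)⟩

end quat

section quat
open Filter Topology

lemma contDiffAt_nrm {q : ℂ → QH} {n : WithTop ℕ∞} {z : ℂ} (h : ContDiffAt ℝ n q z) (h0 : q z ≠ 0) :
    ContDiffAt ℝ n (fun z => nrm (q z)) z := by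
  unfold nrm
  exact ((h.norm ℝ h0).inv (norm_ne_zero_iff.2 h0)).smul h

lemma contDiffAt_prj {x y : ℂ → QH} {n : WithTop ℕ∞} {z : ℂ} (hx : ContDiffAt ℝ n x z)
    (hy : ContDiffAt ℝ n y z) (G : QH) :
    ContDiffAt ℝ n (fun z => Prj (x z) (y z) G) z := by
  unfold Prj
  exact ((contDiffAt_const.sub ((hx.mul contDiffAt_const).mul contDiffAt_const)).sub
    ((hy.mul contDiffAt_const).mul contDiffAt_const)).sub
    (((hx.mul hy).mul contDiffAt_const).mul contDiffAt_const)

lemma exists_frame {S : Set ℂ} (hS : IsOpen S) {J : Set ℝ} (hJo : IsOpen J) (hJc : J.OrdConnected)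
    (hJS : ∀ x ∈ J, (x : ℂ) ∈ S) {x y : ℂ → QH} {n : WithTop ℕ∞} (hx : ∀ z ∈ S, ContDiffAt ℝ n x z)
    (hy : ∀ z ∈ S, ContDiffAt ℝ n y z) (h : ∀ z ∈ S, ON (x z) (y z)) :
    ∃ S' : Set ℂ, S' ⊆ S ∧ IsOpen S' ∧ (∀ x ∈ J, (x : ℂ) ∈ S') ∧ ∃ F : ℂ → QH,
      ∀ z ∈ S', ContDiffAt ℝ n F z ∧ ‖F z‖ = 1 ∧ InL (x z) (y z) (F z) := by
  rcases J.eq_empty_or_nonempty with rfl | hne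
  · exact ⟨∅, by simp, isOpen_empty, by simp, 0, by simp⟩
  have : ContractibleSpace J := hJc.convex.contractibleSpace hne
  have : LocallyPathConnectedSpace J := hJo.locallyPathConnectedSpace
  have hxJ : Continuous (fun t : J => x ((t : ℝ) : ℂ)) := by
    rw [continuous_iff_continuousAt]
    intro t
    exact (hx _ (hJS t t.2)).continuousAt.comp (f := fun t : J => ((t : ℝ) : ℂ)) (by fun_prop)
  have hyJ : Continuous (fun t : J => y ((t : ℝ) : ℂ)) := by
    rw [continuous_iff_continuousAt]
    intro t
    exact (hy _ (hJS t t.2)).continuousAt.comp (f := fun t : J => ((t : ℝ) : ℂ)) (by fun_prop)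
  obtain ⟨FJ, hFc, hF⟩ := exists_lift hxJ hyJ (fun t => h _ (hJS t t.2))
  classical
  let FR : ℝ → QH := fun t => if ht : t ∈ J then FJ ⟨t, ht⟩ else 0
  have hFR : ContinuousOn FR J := by
    rw [continuousOn_iff_continuous_domRestrict]
    refine hFc.congr fun t => ?_
    simp [FR]
  let P : ℂ → QH := fun z => Prj (x z) (y z) (FR z.re)
  let U : Set ℂ := S ∩ Complex.re ⁻¹' J
  have hU : IsOpen U := hS.inter (hJo.preimage Complex.continuous_re)
  have hP : ContinuousOn P U := by
    have h1 : ContinuousOn x U := fun z hz => (hx z hz.1).continuousAt.continuousWithinAt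
    have h2 : ContinuousOn y U := fun z hz => (hy z hz.1).continuousAt.continuousWithinAt
    have h3 : ContinuousOn (fun z : ℂ => FR z.re) U :=
      hFR.comp Complex.continuous_re.continuousOn (fun z hz => hz.2)
    simp only [P, Prj]
    exact ((h3.sub ((h1.mul h3).mul continuousOn_const)).sub ((h2.mul h3).mul continuousOn_const)).sub
      (((h1.mul h2).mul h3).mul continuousOn_const)
  let S' : Set ℂ := U ∩ P ⁻¹' {0}ᶜ
  have hS' : IsOpen S' := hP.isOpen_inter_preimage hU isOpen_compl_singleton
  have hF1 : ∀ z ∈ S', ‖nrm (P z)‖ = 1 := fun z hz => norm_nrm hz.2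
  have hF2 : ∀ z ∈ S', InL (x z) (y z) (nrm (P z)) := fun z hz => ((h z hz.1.1).inL _).smul _
  refine ⟨S', fun z hz => hz.1.1, hS', ?_, fun z => nrm (P z), fun z hz => ⟨?_, hF1 z hz, hF2 z hz⟩⟩
  · intro t ht
    refine ⟨⟨hJS t ht, by simpa using ht⟩, ?_⟩
    have := hF ⟨t, ht⟩
    simp only [P, FR, Complex.ofReal_re, ht, dif_pos, Set.mem_preimage, Set.mem_compl_iff, Set.mem_singleton_iff]
    rw [this.2.prj_self, ← norm_eq_zero, norm_smul, this.1]; norm_num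
  · set ψ := nrm (P z) with hψ
    let Q : ℂ → QH := fun w => Prj (x w) (y w) ψ
    have hQc : ContDiffAt ℝ n Q z := contDiffAt_prj (hx z hz.1.1) (hy z hz.1.1) ψ
    have hQz : Q z = (4 : ℝ) • ψ := (hF2 z hz).prj_self
    have hψ1 : ‖ψ‖ = 1 := hF1 z hz
    have hQ0 : Q z ≠ 0 := by
      rw [hQz, ← norm_ne_zero_iff, norm_smul, hψ1]; norm_num
    have hnQ : nrm (Q z) = ψ := by
      rw [hQz, nrm, norm_smul, hψ1, smul_smul]; norm_num
    have hQn := contDiffAt_nrm hQc hQ0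
    refine hQn.congr_of_eventuallyEq ?_
    have hPz : ContinuousAt P z := hP.continuousAt (hU.mem_nhds hz.1)
    have hPn : ContinuousAt (fun z => nrm (P z)) z := by
      unfold nrm
      exact (hPz.norm.inv₀ (norm_ne_zero_iff.2 hz.2)).smul hPz
    have hsum : ∀ᶠ w in 𝓝 z, nrm (P w) + nrm (Q w) ≠ 0 := by
      refine (hPn.add hQn.continuousAt).eventually_ne ?_
      simp only [Pi.add_apply, hnQ, ← hψ]
      rw [← two_smul ℝ, ← norm_ne_zero_iff, norm_smul, hψ1]; norm_num
    filter_upwards [hsum, hS'.mem_nhds hz, hQc.continuousAt.eventually_ne hQ0] with w h1 h2 h3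
    rcases (((h w h2.1.1).inL ψ).smul _ : InL (x w) (y w) (nrm (Q w))).eq_or (hF2 w h2) (norm_nrm h3) (hF1 w h2) with h4 | h4
    · exact h4
    · exact absurd (by rw [h4]; exact neg_add_cancel _) h1

end quat

section generic
variable {V : Type*} [NormedRing V] [NormedAlgebra ℂ V] [CompleteSpace V]
open Filter Topology

def BN (B : V →L[ℂ] V →L[ℂ] ℂ) (X : V) : ℝ := (B X X).re

lemma BN_contDiff (B : V →L[ℂ] V →L[ℂ] ℂ) (n : WithTop ℕ∞) : ContDiff ℝ n (BN B) := by
  have h : ContDiff ℂ n (fun X => B X X) :=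
    (B.isBoundedBilinearMap.contDiff).comp (contDiff_id.prodMk contDiff_id)
  exact Complex.reCLM.contDiff.comp (h.restrict_scalars ℝ)

lemma BN_analytic (B : V →L[ℂ] V →L[ℂ] ℂ) (X : V) : AnalyticAt ℝ (BN B) X := by
  have h : AnalyticAt ℂ (fun X => B X X) X := (B.analyticAt_bilinear (X, X)).comp₂ analyticAt_id analyticAt_id
  exact (Complex.reCLM.analyticAt _).comp (h.restrictScalars (𝕜 := ℝ))

def scl (B : V →L[ℂ] V →L[ℂ] ℂ) (X Y : V) : ℝ := Real.exp ((Real.log (BN B X) - Real.log (BN B Y)) / 2)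

lemma scl_pos (B : V →L[ℂ] V →L[ℂ] ℂ) (X Y : V) : 0 < scl B X Y := Real.exp_pos _

lemma scl_sq (B : V →L[ℂ] V →L[ℂ] ℂ) {X Y : V} (hX : 0 < BN B X) (hY : 0 < BN B Y) :
    scl B X Y * scl B X Y * BN B Y = BN B X := by
  rw [scl, ← Real.exp_add, add_halves, Real.exp_sub, Real.exp_log hX, Real.exp_log hY]
  field_simp

lemma scl_analytic (B : V →L[ℂ] V →L[ℂ] ℂ) {X Y : ℝ → V} {t : ℝ} (hX : AnalyticAt ℝ X t)
    (hY : AnalyticAt ℝ Y t) (pX : 0 < BN B (X t)) (pY : 0 < BN B (Y t)) :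
    AnalyticAt ℝ (fun t => ((scl B (X t) (Y t) : ℝ) : ℂ) • Y t) t := by
  have h1 : AnalyticAt ℝ (fun t => BN B (X t)) t := (BN_analytic B _).comp hX
  have h2 : AnalyticAt ℝ (fun t => BN B (Y t)) t := (BN_analytic B _).comp hY
  have h3 : AnalyticAt ℝ (fun t => scl B (X t) (Y t)) t := by
    unfold scl
    exact (((h1.log pX).sub (h2.log pY)).div_const).rexp
  have h4 := h3.smul hY
  refine h4.congr ?_
  filter_upwards with s
  simp

lemma contDiffAt_u (B : V →L[ℂ] V →L[ℂ] ℂ) {X : ℂ → V} {z : ℂ} {n : WithTop ℕ∞} (h : ContDiffAt ℝ n X z)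
    (hp : 0 < BN B (X z)) : ContDiffAt ℝ n (fun z => Real.log (BN B (X z) / 4) / 2) z := by
  have h1 : ContDiffAt ℝ n (fun z => BN B (X z)) z := (BN_contDiff B n).contDiffAt.comp z h
  exact ((h1.div_const 4).log (by positivity)).div_const 2

lemma contDiffAt_E {u : ℂ → ℝ} {X : ℂ → V} {z : ℂ} {n : WithTop ℕ∞} (hu : ContDiffAt ℝ n u z)
    (h : ContDiffAt ℝ n X z) (T : V →L[ℝ] QH) :
    ContDiffAt ℝ n (fun z => T ((((2 * Real.exp (u z))⁻¹ : ℝ) : ℂ) • X z)) z := by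
  have h1 : ContDiffAt ℝ n (fun z => (2 * Real.exp (u z))⁻¹) z :=
    (contDiffAt_const.mul hu.exp).inv (by positivity)
  refine (T.contDiff.contDiffAt.comp z (h1.smul h)).congr_of_eventuallyEq ?_
  filter_upwards with s
  exact congrArg T (Complex.coe_smul _ _)

lemma contDiffAt_T {q : ℂ → QH} {z : ℂ} {n : WithTop ℕ∞} (hu : ContDiffAt ℝ n q z)
    (T : QH →L[ℝ] V) : ContDiffAt ℝ n (fun z => T (q z)) z := T.contDiff.contDiffAt.comp z hu

lemma isOpen_pos (B : V →L[ℂ] V →L[ℂ] ℂ) {X : ℂ → V} {S : Set ℂ} (hS : IsOpen S)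
    (h : ∀ z ∈ S, ContDiffAt ℝ 0 X z) : IsOpen (S ∩ {z | 0 < BN B (X z)}) := by
  have : ContinuousOn (fun z => BN B (X z)) S := fun z hz =>
    ((BN_contDiff B 0).continuous.continuousAt.comp (h z hz).continuousAt).continuousWithinAt
  exact this.isOpen_inter_preimage hS isOpen_Ioi

lemma deriv_fixed {W : Type*} [NormedAddCommGroup W] [NormedSpace ℝ W] {J : Set ℝ} (hJ : IsOpen J)
    {f₀ : ℝ → V} (hf₀ : AnalyticOnNhd ℝ f₀ J) (L M : V →L[ℝ] W) (h : ∀ x ∈ J, L (f₀ x) = M (f₀ x)) :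
    ∀ x ∈ J, L (deriv f₀ x) = M (deriv f₀ x) := by
  intro x hx
  have hd := (hf₀ x hx).differentiableAt.hasDerivAt
  refine (L.hasFDerivAt.comp_hasDerivAt x hd).unique ((M.hasFDerivAt.comp_hasDerivAt x hd).congr_of_eventuallyEq ?_)
  filter_upwards [hJ.mem_nhds hx] with t ht
  exact h t ht

lemma deriv_analytic {J : Set ℝ} {f₀ : ℝ → V} (hf₀ : AnalyticOnNhd ℝ f₀ J) : AnalyticOnNhd ℝ (deriv f₀) J :=
  hf₀.deriv

end generic

section concrete
lemma su_form {X : M2} (h1 : Xᴴ = -X) (h2 : X.trace = 0) :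
    ∃ a b c : ℝ, X = (a : ℂ) • e1 + (b : ℂ) • e2 + (c : ℂ) • e3 := by
  have h00 := congrFun (congrFun h1 0) 0
  have h01 := congrFun (congrFun h1 0) 1
  have h11 := congrFun (congrFun h1 1) 1
  simp [conjTranspose_apply] at h00 h01 h11
  rw [Matrix.trace_fin_two] at h2
  refine ⟨-(X 0 1).im, (X 0 1).re, (X 0 0).im, ?_⟩
  simp only [Complex.ext_iff, conj_re, conj_im, Complex.neg_re, Complex.neg_im, Complex.add_re, Complex.add_im, Complex.zero_re, Complex.zero_im] at h00 h01 h11 h2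
  ext i j
  fin_cases i <;> fin_cases j <;> apply Complex.ext <;> simp [e1, e2, e3] <;> linarith

def σL : M2 →ₗ[ℝ] M2 where
  toFun X := -Xᴴ
  map_add' X Y := by simp [add_comm]
  map_smul' r X := by
    ext i j; simp

def σM : M2 →L[ℝ] M2 := LinearMap.toContinuousLinearMap σL
def trM : M2 →L[ℂ] ℂ := LinearMap.toContinuousLinearMap (Matrix.traceLinearMap (Fin 2) ℂ ℂ)
def BM : M2 →L[ℂ] M2 →L[ℂ] ℂ := LinearMap.toContinuousLinearMap
  ((LinearMap.toContinuousLinearMap (𝕜 := ℂ) (E := M2) (F' := ℂ)).toLinearMap.comp 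
    (LinearMap.mk₂ ℂ ip (by intros; simp [ip, add_mul, mul_add]) (by intros; simp [ip]; try ring) (by intros; simp [ip, mul_add]) (by intros; simp [ip]; try ring)))
lemma σM_apply (X : M2) : σM X = -Xᴴ := rfl
lemma trM_apply (X : M2) : trM X = X.trace := rfl
lemma BM_apply (X Y : M2) : BM X Y = ip X Y := rfl

lemma conc_bjorling {J : Set ℝ} (hJ : IsOpen J) {f₀ g : ℝ → M2}
    (hf₀ : AnalyticOnNhd ℝ f₀ J) (hg : AnalyticOnNhd ℝ g J) (H : ℝ)
    (hσf : ∀ x ∈ J, (f₀ x)ᴴ = - f₀ x) (htf : ∀ x ∈ J, trace (f₀ x) = 0)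
    (hσg : ∀ x ∈ J, (g x)ᴴ = - g x) (htg : ∀ x ∈ J, trace (g x) = 0)
    (hBB : ∀ x ∈ J, ip (deriv f₀ x) (deriv f₀ x) = ip (g x) (g x))
    (hB0 : ∀ x ∈ J, ip (deriv f₀ x) (g x) = 0) :
    ∃ S : Set ℂ, IsOpen S ∧ (∀ x ∈ J, (x : ℂ) ∈ S) ∧ ∃ f : ℂ → M2,
      (∀ z ∈ S, GenOut f H σM trM BM z) ∧
      (∀ x ∈ J, f x = f₀ x ∧ gpx f x = deriv f₀ x ∧ gpy f x = g x) := by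
  refine generic_bjorling (V := M2) hJ hf₀ hg H σM ?_ ?_ ?_ trM ?_ ?_ BM ?_ ?_ ?_ ?_ ?_ htf ?_ htg hBB hB0
  · intro X Y
    change -(X * Y - Y * X)ᴴ = (-Xᴴ) * (-Yᴴ) - (-Yᴴ) * (-Xᴴ)
    simp only [conjTranspose_sub, conjTranspose_mul, neg_mul_neg]; abel
  · intro l X
    change -(l • X)ᴴ = (star l) • (-Xᴴ)
    rw [conjTranspose_smul, smul_neg]
  · intro X
    change -(-Xᴴ)ᴴ = X
    simp only [conjTranspose_neg, conjTranspose_conjTranspose, neg_neg]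
  · intro X Y
    change (X * Y - Y * X).trace = 0
    rw [trace_sub, trace_mul_comm, sub_self]
  · intro X hX
    change X.trace = 0 at hX
    change (-Xᴴ).trace = 0
    rw [trace_neg, trace_conjTranspose, hX]; simp
  · intro X Y
    change ip X (X * Y - Y * X) = 0
    rw [ip, mul_sub, trace_sub, ← mul_assoc X Y X, trace_mul_comm (X * Y) X, sub_self, mul_zero]
  · intro X Y
    change ip (X * Y - Y * X) X = 0
    rw [ip, sub_mul, trace_sub, mul_assoc X Y X, trace_mul_comm X (Y * X), sub_self, mul_zero]
  · intro X Y
    change ip X Y = ip Y X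
    rw [ip, ip, trace_mul_comm]
  · intro X hX
    change ip X X = 0 at hX
    change ip (-Xᴴ) (-Xᴴ) = 0
    rw [ip] at *
    rw [neg_mul_neg, ← conjTranspose_mul, trace_conjTranspose]
    have : (X * X).trace = 0 := by simpa using hX
    rw [this]; simp
  · intro x hx; change -(f₀ x)ᴴ = f₀ x; rw [hσf x hx, neg_neg]
  · intro x hx; change -(g x)ᴴ = g x; rw [hσg x hx, neg_neg]

lemma BNM (X : M2) : BN BM X = (ip X X).re := rfl

lemma ip_form (a b c a' b' c' : ℝ) : ip ((a : ℂ) • e1 + (b : ℂ) • e2 + (c : ℂ) • e3)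
    ((a' : ℂ) • e1 + (b' : ℂ) • e2 + (c' : ℂ) • e3) = ((a * a' + b * b' + c * c' : ℝ) : ℂ) := by
  simp [ip, e1, e2, e3, Matrix.trace_fin_two, Matrix.mul_apply, Fin.sum_univ_two]
  ring_nf
  simp only [Complex.I_sq]
  ring

lemma ip_re {X : M2} (h1 : Xᴴ = -X) (h2 : X.trace = 0) : ip X X = (BN BM X : ℂ) := by
  obtain ⟨a, b, c, rfl⟩ := su_form h1 h2
  rw [BNM, ip_form, Complex.ofReal_re]

lemma ip_pos {X : M2} (h1 : Xᴴ = -X) (h2 : X.trace = 0) (h0 : X ≠ 0) : 0 < BN BM X := by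
  obtain ⟨a, b, c, rfl⟩ := su_form h1 h2
  rw [BNM, ip_form, Complex.ofReal_re]
  by_contra h
  have ha : a = 0 := by nlinarith [mul_self_nonneg a, mul_self_nonneg b, mul_self_nonneg c]
  have hb : b = 0 := by nlinarith [mul_self_nonneg a, mul_self_nonneg b, mul_self_nonneg c]
  have hc : c = 0 := by nlinarith [mul_self_nonneg a, mul_self_nonneg b, mul_self_nonneg c]
  apply h0; simp [ha, hb, hc]

lemma su_anti {X Y : M2} (h1 : Xᴴ = -X) (h2 : X.trace = 0) (k1 : Yᴴ = -Y) (k2 : Y.trace = 0) :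
    X * Y + Y * X = (-(2 * ip X Y)) • (1 : M2) := by
  obtain ⟨a, b, c, rfl⟩ := su_form h1 h2
  obtain ⟨a', b', c', rfl⟩ := su_form k1 k2
  rw [ip_form]
  ext i j
  fin_cases i <;> fin_cases j <;>
    simp [e1, e2, e3, Matrix.mul_apply, Fin.sum_univ_two] <;> ring_nf <;> try (simp only [Complex.I_sq]; ring)

def toML : QH →ₗ[ℝ] M2 where
  toFun q := (q.re : ℂ) • 1 + (q.imI : ℂ) • e1 + (q.imJ : ℂ) • e2 + (q.imK : ℂ) • e3
  map_add' p q := by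
    simp only [Quaternion.re_add, Quaternion.imI_add, Quaternion.imJ_add, Quaternion.imK_add, Complex.ofReal_add]
    module
  map_smul' r q := by
    simp only [Quaternion.re_smul, Quaternion.imI_smul, Quaternion.imJ_smul, Quaternion.imK_smul, smul_eq_mul,
      Complex.ofReal_mul, RingHom.id_apply, smul_add, ← Complex.coe_smul, mul_smul]

def toM : QH →L[ℝ] M2 := LinearMap.toContinuousLinearMap toML

lemma toM_apply (q : QH) : toM q = (q.re : ℂ) • 1 + (q.imI : ℂ) • e1 + (q.imJ : ℂ) • e2 + (q.imK : ℂ) • e3 := rfl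

def ofML : M2 →ₗ[ℝ] QH where
  toFun X := ⟨(X 0 0).re, -(X 0 1).im, (X 0 1).re, (X 0 0).im⟩
  map_add' p q := by
    apply Quaternion.ext
    · exact Complex.add_re _ _
    · change -(p 0 1 + q 0 1).im = -(p 0 1).im + -(q 0 1).im
      rw [Complex.add_im]; ring
    · exact Complex.add_re _ _
    · exact Complex.add_im _ _
  map_smul' r q := by
    apply Quaternion.ext
    · change (r • q 0 0).re = r * (q 0 0).re
      exact Complex.smul_re _ _
    · change -(r • q 0 1).im = r * -(q 0 1).im
      rw [Complex.smul_im, smul_eq_mul]; ring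
    · change (r • q 0 1).re = r * (q 0 1).re
      exact Complex.smul_re _ _
    · change (r • q 0 0).im = r * (q 0 0).im
      exact Complex.smul_im _ _

def ofM : M2 →L[ℝ] QH := LinearMap.toContinuousLinearMap ofML

lemma ofM_apply (X : M2) : ofM X = ⟨(X 0 0).re, -(X 0 1).im, (X 0 1).re, (X 0 0).im⟩ := rfl

lemma ofM_toM (q : QH) : ofM (toM q) = q := by
  rw [ofM_apply, toM_apply]
  apply Quaternion.ext <;> simp [e1, e2, e3]

lemma toM_inj {p q : QH} (h : toM p = toM q) : p = q := by
  rw [← ofM_toM p, h, ofM_toM]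

lemma toM_ofM {X : M2} (h1 : Xᴴ = -X) (h2 : X.trace = 0) : toM (ofM X) = X := by
  obtain ⟨a, b, c, rfl⟩ := su_form h1 h2
  obtain ⟨q, hq⟩ : ∃ q : QH, (a : ℂ) • e1 + (b : ℂ) • e2 + (c : ℂ) • e3 = toM q := by
    refine ⟨⟨0, a, b, c⟩, ?_⟩
    change _ = ((0 : ℝ) : ℂ) • (1 : M2) + (a : ℂ) • e1 + (b : ℂ) • e2 + (c : ℂ) • e3
    rw [Complex.ofReal_zero, zero_smul, zero_add]
  rw [hq, ofM_toM]

lemma toM_mul (p q : QH) : toM (p * q) = toM p * toM q := by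
  simp only [toM_apply, Quaternion.re_mul, Quaternion.imI_mul, Quaternion.imJ_mul, Quaternion.imK_mul]
  ext i j
  fin_cases i <;> fin_cases j <;>
    simp [e1, e2, e3, Matrix.mul_apply, Fin.sum_univ_two] <;> ring_nf <;> try (simp only [Complex.I_sq]; ring)

lemma toM_one : toM 1 = 1 := by
  rw [toM_apply]; simp

lemma toM_qi : toM qi = e1 := by rw [toM_apply]; simp
lemma toM_qj : toM qj = e2 := by rw [toM_apply]; simp
lemma toM_qk : toM qk = e3 := by rw [toM_apply]; simp

lemma toM_star (q : QH) (h : ‖q‖ = 1) : (toM q)ᴴ * toM q = 1 ∧ (toM q).det = 1 := by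
  have hn : q.re * q.re + q.imI * q.imI + q.imJ * q.imJ + q.imK * q.imK = 1 := by
    have := Quaternion.normSq_eq_norm_mul_self q
    rw [h, Quaternion.normSq_def'] at this
    linarith
  have hc := congrArg (fun r : ℝ => (r : ℂ)) hn
  simp only [Complex.ofReal_add, Complex.ofReal_mul, Complex.ofReal_one] at hc
  rw [toM_apply]
  constructor
  · ext i j
    fin_cases i <;> fin_cases j <;>
      simp [e1, e2, e3, Matrix.mul_apply, Fin.sum_univ_two] <;> ring_nf <;> simp only [Complex.I_sq] <;>
      first | linear_combination hc | ring
  · simp [e1, e2, e3, Matrix.det_fin_two]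
    ring_nf
    simp only [Complex.I_sq]
    linear_combination hc

end concrete

lemma su_smul {X : M2} (h1 : Xᴴ = -X) (h2 : X.trace = 0) (s : ℝ) :
    ((s : ℂ) • X)ᴴ = -((s : ℂ) • X) ∧ ((s : ℂ) • X).trace = 0 := by
  constructor
  · rw [conjTranspose_smul, h1, smul_neg]
    simp
  · rw [trace_smul, h2, smul_zero]

lemma ip_smul (s t : ℂ) (X Y : M2) : ip (s • X) (t • Y) = s * t * ip X Y := by
  rw [ip, ip, Matrix.smul_mul, Matrix.mul_smul, trace_smul, trace_smul, smul_eq_mul, smul_eq_mul]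
  ring

lemma ip_symm (X Y : M2) : ip X Y = ip Y X := by
  rw [ip, ip, trace_mul_comm]

lemma s_sq (u : ℝ) : ((((2 * Real.exp u)⁻¹ : ℝ) : ℂ)) * (((2 * Real.exp u)⁻¹ : ℝ) : ℂ) *
    ((4 * Real.exp (2 * u) : ℝ) : ℂ) = 1 := by
  rw [← Complex.ofReal_mul, ← Complex.ofReal_mul, ← Complex.ofReal_one]
  congr 1
  rw [two_mul u, Real.exp_add]
  have := Real.exp_pos u
  field_simp
  norm_num

lemma sq_of_ip {X : M2} (h1 : Xᴴ = -X) (h2 : X.trace = 0) (h : ip X X = 1) : X * X = -1 := by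
  have := su_anti h1 h2 h1 h2
  rw [h] at this
  have h3 : (2 : ℂ) • (X * X) = (2 : ℂ) • (-1 : M2) := by
    rw [two_smul, this]; module
  exact smul_right_injective M2 (two_ne_zero (α := ℂ)) h3

lemma on_of_ip {X Y : M2} (h1 : Xᴴ = -X) (h2 : X.trace = 0) (k1 : Yᴴ = -Y) (k2 : Y.trace = 0)
    (hX : ip X X = 1) (hY : ip Y Y = 1) (hXY : ip X Y = 0) : ON (ofM X) (ofM Y) := by
  have aX := sq_of_ip h1 h2 hX
  have aY := sq_of_ip k1 k2 hY
  have an := su_anti h1 h2 k1 k2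
  rw [hXY, mul_zero, neg_zero, zero_smul] at an
  have m1 : toM (-1) = -1 := by rw [map_neg, toM_one]
  refine ⟨toM_inj ?_, toM_inj ?_, toM_inj ?_⟩
  · rw [toM_mul, toM_ofM h1 h2, aX, m1]
  · rw [toM_mul, toM_ofM k1 k2, aY, m1]
  · rw [map_neg, toM_mul, toM_mul, toM_ofM h1 h2, toM_ofM k1 k2]
    exact eq_neg_of_add_eq_zero_right an

lemma e12 : e1 * e2 = e3 := by
  rw [← toM_qi, ← toM_qj, ← toM_qk, ← toM_mul, qij]

lemma frame_conj {E1 E2 F : M2} (hd : F.det = 1) (a : E1 * F = F * e1) (b : E2 * F = F * e2) :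
    F * e1 * F⁻¹ = E1 ∧ F * e2 * F⁻¹ = E2 ∧ F * e3 * F⁻¹ = E1 * E2 := by
  have hF : F * F⁻¹ = 1 := Matrix.mul_nonsing_inv F (by rw [hd]; exact isUnit_one)
  refine ⟨?_, ?_, ?_⟩
  · rw [← a, mul_assoc, hF, mul_one]
  · rw [← b, mul_assoc, hF, mul_one]
  · rw [← e12, ← mul_assoc, ← a, mul_assoc E1, ← b, ← mul_assoc, mul_assoc _ F, hF, mul_one]

lemma ip_brk {X Y : M2} {s r : ℂ} (hs : s * s * r = 1)
    (hX : (s • X) * (s • X) = -1) (hY : (s • Y) * (s • Y) = -1)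
    (an : (s • Y) * (s • X) = -((s • X) * (s • Y))) (H : ℂ) :
    ip (H • (X * Y - Y * X)) ((s • X) * (s • Y)) = 2 * r * H := by
  set A := s • X
  set B := s • Y
  have h : X * Y - Y * X = (2 * r) • (A * B) := by
    have h1 : A * B - B * A = (s * s) • (X * Y - Y * X) := by
      simp only [A, B, Matrix.smul_mul, Matrix.mul_smul, smul_sub, smul_smul]
    have h2 : r • (A * B - B * A) = X * Y - Y * X := by
      rw [h1, smul_smul, mul_comm r, hs, one_smul]
    rw [← h2, an]; module
  have hAB : (A * B) * (A * B) = -1 := by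
    calc (A * B) * (A * B) = A * (B * A) * B := by noncomm_ring
      _ = -((A * A) * (B * B)) := by rw [an]; noncomm_ring
      _ = -1 := by rw [hX, hY]; noncomm_ring
  rw [h, ip, smul_smul, Matrix.smul_mul, hAB, trace_smul, trace_neg, trace_one, smul_eq_mul]
  simp; ring

/-- solution of the Björling problem for non-minimal CMC surfaces
(existence): given a regular real analytic curve `f₀` in su(2) = E³, a nonvanishing real
analytic orthogonal vector field `v` along it, and `H ≠ 0`, there is a conformal CMC `H`
immersion containing the curve whose tangent planes along the curve are spanned by
`f₀′` and `v`. -/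
theorem bjorling_existence
    (J : Set ℝ) (hJo : IsOpen J) (hJc : J.OrdConnected)
    (f₀ v : ℝ → M2)
    (hf₀ : AnalyticOnNhd ℝ f₀ J) (hv : AnalyticOnNhd ℝ v J)
    (hf₀su : ∀ x ∈ J, (f₀ x)ᴴ = -(f₀ x) ∧ (f₀ x).trace = 0)
    (hvsu : ∀ x ∈ J, (v x)ᴴ = -(v x) ∧ (v x).trace = 0)
    (hreg : ∀ x ∈ J, deriv f₀ x ≠ 0)
    (hvnz : ∀ x ∈ J, v x ≠ 0)
    (horth : ∀ x ∈ J, ip (v x) (deriv f₀ x) = 0)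
    (H : ℝ) (hH : H ≠ 0) :
    ∃ S : Set ℂ, IsOpen S ∧ (∀ x ∈ J, (x : ℂ) ∈ S) ∧
      ∃ f : ℂ → M2, IsCMCImmersion S H f ∧
        (∀ x ∈ J, f (x : ℂ) = f₀ x) ∧
        (∀ x ∈ J, ∃ c : ℝ, 0 < c ∧ py f (x : ℂ) = (c : ℂ) • v x) := by
  have hd1 : ∀ x ∈ J, (deriv f₀ x)ᴴ = -(deriv f₀ x) := by
    intro x hx
    have := deriv_fixed (V := M2) hJo hf₀ σM (ContinuousLinearMap.id ℝ M2) (by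
      intro x hx
      change -(f₀ x)ᴴ = f₀ x
      rw [(hf₀su x hx).1, neg_neg]) x hx
    change -(deriv f₀ x)ᴴ = deriv f₀ x at this
    rw [← this, neg_neg, this]
  have hd2 : ∀ x ∈ J, (deriv f₀ x).trace = 0 := by
    intro x hx
    exact deriv_fixed (V := M2) hJo hf₀ (trM.restrictScalars ℝ) 0 (by
      intro x hx
      exact (hf₀su x hx).2) x hx
  have pd : ∀ x ∈ J, 0 < BN BM (deriv f₀ x) := fun x hx => ip_pos (hd1 x hx) (hd2 x hx) (hreg x hx)
  have pv : ∀ x ∈ J, 0 < BN BM (v x) := fun x hx => ip_pos (hvsu x hx).1 (hvsu x hx).2 (hvnz x hx)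
  have hda := deriv_analytic (V := M2) hf₀
  obtain ⟨S0, hS0, hJ0, f, hG, hfJ⟩ := conc_bjorling hJo hf₀
    (g := fun t => ((scl BM (deriv f₀ t) (v t) : ℝ) : ℂ) • v t)
    (fun x hx => scl_analytic (V := M2) BM (hda x hx) (hv x hx) (pd x hx) (pv x hx)) H
    (fun x hx => (hf₀su x hx).1) (fun x hx => (hf₀su x hx).2)
    (fun x hx => (su_smul (hvsu x hx).1 (hvsu x hx).2 _).1)
    (fun x hx => (su_smul (hvsu x hx).1 (hvsu x hx).2 _).2)
    (by
      intro x hx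
      rw [ip_smul, ip_re (hd1 x hx) (hd2 x hx), ip_re (hvsu x hx).1 (hvsu x hx).2,
        ← scl_sq BM (pd x hx) (pv x hx), Complex.ofReal_mul, Complex.ofReal_mul])
    (by
      intro x hx
      have := ip_smul 1 ((scl BM (deriv f₀ x) (v x) : ℝ) : ℂ) (deriv f₀ x) (v x)
      rw [one_smul, ip_symm (deriv f₀ x) (v x), horth x hx, mul_zero] at this
      exact this)
  have hS1 : IsOpen (S0 ∩ {z | 0 < BN BM (px f z)}) :=
    isOpen_pos (V := M2) BM hS0 (fun z hz => (hG z hz).cx 0)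
  have hJ1 : ∀ x ∈ J, (x : ℂ) ∈ S0 ∩ {z | 0 < BN BM (px f z)} := by
    intro x hx
    refine ⟨hJ0 x hx, ?_⟩
    have h2 : px f x = deriv f₀ x := (hfJ x hx).2.1
    change 0 < BN BM (px f x)
    rw [h2]; exact pd x hx
  set S1 := S0 ∩ {z | 0 < BN BM (px f z)} with hS1d
  set u : ℂ → ℝ := fun z => Real.log (BN BM (px f z) / 4) / 2 with hu
  have cu : ∀ z ∈ S1, ContDiffAt ℝ ((⊤ : ℕ∞) : WithTop ℕ∞) u z := fun z hz =>
    contDiffAt_u (V := M2) BM ((hG z hz.1).cx _) hz.2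
  have sx1 : ∀ z ∈ S1, (px f z)ᴴ = -(px f z) := by
    intro z hz
    have h : -(px f z)ᴴ = px f z := (hG z hz.1).σx
    rw [neg_eq_iff_eq_neg] at h; exact h
  have sx2 : ∀ z ∈ S1, (px f z).trace = 0 := fun z hz => (hG z hz.1).tx
  have sy1 : ∀ z ∈ S1, (py f z)ᴴ = -(py f z) := by
    intro z hz
    have h : -(py f z)ᴴ = py f z := (hG z hz.1).σy
    rw [neg_eq_iff_eq_neg] at h; exact h
  have sy2 : ∀ z ∈ S1, (py f z).trace = 0 := fun z hz => (hG z hz.1).ty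
  have ixx : ∀ z ∈ S1, ip (px f z) (px f z) = ((4 * Real.exp (2 * u z) : ℝ) : ℂ) := by
    intro z hz
    have hp : 0 < BN BM (px f z) := hz.2
    rw [ip_re (sx1 z hz) (sx2 z hz)]
    congr 1
    simp only [hu]
    rw [mul_div_cancel₀ _ (two_ne_zero), Real.exp_log (by positivity)]
    ring
  have iyy : ∀ z ∈ S1, ip (py f z) (py f z) = ((4 * Real.exp (2 * u z) : ℝ) : ℂ) := by
    intro z hz
    rw [← ixx z hz]
    exact (hG z hz.1).Beq.symm
  have ixy : ∀ z ∈ S1, ip (px f z) (py f z) = 0 := fun z hz => (hG z hz.1).Bxy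
  have gx := fun z hz => su_smul (sx1 z hz) (sx2 z hz) ((2 * Real.exp (u z))⁻¹)
  have gy := fun z hz => su_smul (sy1 z hz) (sy2 z hz) ((2 * Real.exp (u z))⁻¹)
  have nx : ∀ z ∈ S1, ip ((((2 * Real.exp (u z))⁻¹ : ℝ) : ℂ) • px f z)
      ((((2 * Real.exp (u z))⁻¹ : ℝ) : ℂ) • px f z) = 1 := fun z hz => by
    rw [ip_smul, ixx z hz, s_sq]
  have ny : ∀ z ∈ S1, ip ((((2 * Real.exp (u z))⁻¹ : ℝ) : ℂ) • py f z)
      ((((2 * Real.exp (u z))⁻¹ : ℝ) : ℂ) • py f z) = 1 := fun z hz => by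
    rw [ip_smul, iyy z hz, s_sq]
  have nxy : ∀ z ∈ S1, ip ((((2 * Real.exp (u z))⁻¹ : ℝ) : ℂ) • px f z)
      ((((2 * Real.exp (u z))⁻¹ : ℝ) : ℂ) • py f z) = 0 := fun z hz => by
    rw [ip_smul, ixy z hz, mul_zero]
  obtain ⟨S, hSS, hS, hJS, Fq, hF⟩ := exists_frame hS1 hJo hJc hJ1
    (n := ((⊤ : ℕ∞) : WithTop ℕ∞))
    (x := fun z => ofM ((((2 * Real.exp (u z))⁻¹ : ℝ) : ℂ) • px f z))
    (y := fun z => ofM ((((2 * Real.exp (u z))⁻¹ : ℝ) : ℂ) • py f z))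
    (fun z hz => contDiffAt_E (V := M2) (cu z hz) ((hG z hz.1).cx _) ofM)
    (fun z hz => contDiffAt_E (V := M2) (cu z hz) ((hG z hz.1).cy _) ofM)
    (fun z hz => on_of_ip (gx z hz).1 (gx z hz).2 (gy z hz).1 (gy z hz).2
      (nx z hz) (ny z hz) (nxy z hz))
  refine ⟨S, hS, hJS, f, ⟨?_, ?_, u, ?_, ?_, fun z => toM (Fq z), ?_, ?_⟩, ?_, ?_⟩
  · exact fun z hz => ((hG z (hSS hz).1).cf _).contDiffWithinAt
  · intro z hz
    have h : -(f z)ᴴ = f z := (hG z (hSS hz).1).σf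
    rw [neg_eq_iff_eq_neg] at h
    exact ⟨h, (hG z (hSS hz).1).tf⟩
  · exact fun z hz => (cu z (hSS hz)).contDiffWithinAt
  · exact fun z hz => ⟨ixx z (hSS hz), iyy z (hSS hz), ixy z (hSS hz)⟩
  · exact fun z hz => (contDiffAt_T (V := M2) (hF z hz).1 toM).contDiffWithinAt
  · intro z hz
    have hz1 := hSS hz
    obtain ⟨-, hn, ha, hb⟩ := hF z hz
    obtain ⟨t1, t2⟩ := toM_star (Fq z) hn
    have ha' := congrArg toM ha
    have hb' := congrArg toM hb
    rw [toM_mul, toM_mul, toM_ofM (gx z hz1).1 (gx z hz1).2, toM_qi] at ha'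
    rw [toM_mul, toM_mul, toM_ofM (gy z hz1).1 (gy z hz1).2, toM_qj] at hb'
    obtain ⟨c1, c2, c3⟩ := frame_conj t2 ha' hb'
    refine ⟨t1, t2, c1, c2, ?_⟩
    have hl : px (px f) z + py (py f) z = (H : ℂ) • (px f z * py f z - py f z * px f z) :=
      (hG z hz1.1).lap
    have an := su_anti (gx z hz1).1 (gx z hz1).2 (gy z hz1).1 (gy z hz1).2
    rw [nxy z hz1, mul_zero, neg_zero, zero_smul] at an
    change ip _ (toM (Fq z) * e3 * (toM (Fq z))⁻¹) = _
    rw [c3, hl, ip_brk (s_sq (u z)) (sq_of_ip (gx z hz1).1 (gx z hz1).2 (nx z hz1))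
      (sq_of_ip (gy z hz1).1 (gy z hz1).2 (ny z hz1)) (eq_neg_of_add_eq_zero_right an)]
    push_cast; ring
  · exact fun x hx => (hfJ x hx).1
  · exact fun x hx => ⟨_, scl_pos BM (deriv f₀ x) (v x), (hfJ x hx).2.2⟩
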